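/- arXiv:1103.4633 — 8 statements merged into one kernel-verified Lean document; each statement's English description precedes it below -/
import Mathlib

section
/- Let R and S be commutative local rings with maximal ideals m_R and m_S, and let f : R → S be a local ring homomorphism. Suppose there is an integer C ≥ 1 such that for every l ≥ 1: (a) m_S^{lC} ⊆ m_R^l·S, where m_R^l·S denotes the ideal of S generated by f(m_R^l), and (b) the contraction of m_R^l·S along f equals m_R^l, i.e. f^{-1}(m_R^l·S) = m_R^l. Then for every x ∈ m_R whose order t := ord_R(x) is finite, one has t ≤ ord_S(f(x)) ≤ 2C·t. -/
/-- The order of vanishing of an element `z` of a local ring: the supremum of the set of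
`s ∈ ℕ` such that `z` lies in the `s`-th power of the maximal ideal, as an element of
`ℕ∞` (so it is `⊤` when `z` lies in every power). -/
noncomputable def ringOrd (R : Type*) [CommRing R] [IsLocalRing R] (z : R) : ℕ∞ :=
  sSup ((fun n : ℕ => (n : ℕ∞)) '' {s : ℕ | z ∈ (IsLocalRing.maximalIdeal R) ^ s})

/-- algebraic core of Lemma 3.3: let `f : R → S` be a local homomorphism
of commutative local rings, and `C ≥ 1` an integer such that for all `l ≥ 1`:
(a) `m_S^{lC} ⊆ m_R^l · S` and (b) `f⁻¹(m_R^l · S) = m_R^l`.  Then for every `x ∈ m_R`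
of finite order `t := ord_R(x)`, one has `t ≤ ord_S(f x) ≤ 2·C·t`. -/
theorem ringOrd_le_ringOrd_map_le
    {R S : Type*} [CommRing R] [IsLocalRing R] [CommRing S] [IsLocalRing S]
    (f : R →+* S) (hf : IsLocalHom f) (C : ℕ) (hC : 1 ≤ C)
    (ha : ∀ l : ℕ, 1 ≤ l →
      (IsLocalRing.maximalIdeal S) ^ (l * C) ≤
        Ideal.map f ((IsLocalRing.maximalIdeal R) ^ l))
    (hb : ∀ l : ℕ, 1 ≤ l →
      Ideal.comap f (Ideal.map f ((IsLocalRing.maximalIdeal R) ^ l)) =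
        (IsLocalRing.maximalIdeal R) ^ l)
    (x : R) (hx : x ∈ IsLocalRing.maximalIdeal R)
    (ht : ringOrd R x ≠ ⊤) :
    ringOrd R x ≤ ringOrd S (f x) ∧ ringOrd S (f x) ≤ 2 * (C : ℕ∞) * ringOrd R x := by
  have hle : ∀ s : ℕ, x ∈ (IsLocalRing.maximalIdeal R) ^ s → (s : ℕ∞) ≤ ringOrd R x :=
    fun s hs => le_sSup ⟨s, hs, rfl⟩
  constructor
  · refine sSup_le ?_
    rintro _ ⟨s, hs, rfl⟩
    refine le_sSup ⟨s, ?_, rfl⟩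
    have h1 : f x ∈ Ideal.map f ((IsLocalRing.maximalIdeal R) ^ s) := Ideal.mem_map_of_mem f hs
    rw [Ideal.map_pow] at h1
    exact Ideal.pow_right_mono (((IsLocalRing.local_hom_TFAE f).out 0 2).mp hf) s h1
  · obtain ⟨t, htt⟩ := ENat.ne_top_iff_exists.mp ht
    rw [← htt] at hle ⊢
    have h1 : 1 ≤ t := by
      have := hle 1 (by simpa using hx)
      exact_mod_cast this
    refine sSup_le ?_
    rintro _ ⟨s, hs, rfl⟩
    have key : s ≤ 2 * C * t := by
      by_contra hcon
      have h2 : (t + 1) * C ≤ s := by nlinarith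
      have h3 := ha (t + 1) (by omega) (Ideal.pow_le_pow_right h2 hs)
      have h4 : x ∈ (IsLocalRing.maximalIdeal R) ^ (t + 1) := by
        rw [← hb (t + 1) (by omega)]
        exact h3
      have h5 := hle _ h4
      have h6 : t + 1 ≤ t := by exact_mod_cast h5
      omega
    show (s : ℕ∞) ≤ _
    exact_mod_cast key
end

section
/- Let k ≥ 1, let U ⊆ ℂ^k be open, let g : U → ℂ^k be complex-analytic on U, let x ∈ U and y := g(x). Let J : U → ℂ be the Jacobian determinant of g, J(z) := det(Dg(z)) (the determinant of the Fréchet derivative of g at z, an endomorphism of ℂ^k), and assume ord_x(J) < ∞ (i.e. J does not vanish identically near x). Then for every complex-analytic function φ defined on a neighborhood of y with ord_y(φ) < ∞, one has ord_x(φ ∘ g) ≤ (k + ord_x(J)) · ord_y(φ). -/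
/-- The order of vanishing of a function at a point: the smallest `n ∈ ℕ` such that the
`n`-th iterated Fréchet derivative of `f` at `p` is nonzero, as an element of `ℕ∞`
(so it is `⊤` when all iterated derivatives vanish). -/
noncomputable def ordAt {E F : Type*} [NormedAddCommGroup E] [NormedSpace ℂ E]
    [NormedAddCommGroup F] [NormedSpace ℂ F] (f : E → F) (p : E) : ℕ∞ :=
  sInf ((fun n : ℕ => (n : ℕ∞)) '' {n : ℕ | iteratedFDeriv ℂ n f p ≠ 0})

open Asymptotics Topology Filter

namespace OrdAux

/-- `f` is `O(‖v‖^n)` at `x`. -/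
def B {E F : Type*} [NormedAddCommGroup E] [NormedAddCommGroup F] (f : E → F) (x : E) (n : ℕ) :
    Prop :=
  (fun v => f (x + v)) =O[𝓝 0] fun v : E => ‖v‖ ^ n

section
variable {E F : Type*} [NormedAddCommGroup E] [NormedSpace ℂ E]
    [NormedAddCommGroup F] [NormedSpace ℂ F]

lemma pow_isBigO {a b : ℕ} (h : a ≤ b) :
    (fun v : E => ‖v‖ ^ b) =O[𝓝 0] fun v : E => ‖v‖ ^ a := by
  apply IsBigO.of_bound 1
  filter_upwards [Metric.ball_mem_nhds (0 : E) one_pos] with v hv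
  have hv' : ‖v‖ ≤ 1 := by simpa using (mem_ball_zero_iff.1 hv).le
  rw [one_mul, norm_pow, norm_pow, norm_norm]
  exact pow_le_pow_of_le_one (norm_nonneg _) hv' h

lemma B.mono {f : E → F} {x : E} {a b : ℕ} (h : a ≤ b) (hf : B f x b) : B f x a :=
  IsBigO.trans hf (pow_isBigO h)

lemma diag_of_B {f : E → F} {x : E} {p : FormalMultilinearSeries ℂ E F}
    (hp : HasFPowerSeriesAt f p x) {n : ℕ} (hf : B f x n) :
    ∀ i < n, ∀ v, p i (fun _ => v) = 0 := by
  intro i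
  induction i using Nat.strong_induction_on with
  | _ i ih =>
    intro hi
    have h1 := hp.isBigO_sub_partialSum_pow (i + 1)
    have h2 : B f x (i + 1) := hf.mono hi
    have h3 := h2.sub h1
    apply IsBigO.continuousMultilinearMap_apply_eq_zero
    refine h3.congr_left ?_
    intro v
    simp only [FormalMultilinearSeries.partialSum, Finset.sum_range_succ]
    rw [Finset.sum_eq_zero]
    · simp
    · intro j hj
      have := Finset.mem_range.1 hj
      exact ih j this (this.trans hi) v

lemma B_of_diag {f : E → F} {x : E} {p : FormalMultilinearSeries ℂ E F}
    (hp : HasFPowerSeriesAt f p x) {n : ℕ}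
    (h : ∀ i < n, ∀ v, p i (fun _ => v) = 0) : B f x n := by
  refine (hp.isBigO_sub_partialSum_pow n).congr_left ?_
  intro v
  simp only [FormalMultilinearSeries.partialSum]
  rw [Finset.sum_eq_zero, sub_zero]
  intro j hj
  exact h j (Finset.mem_range.1 hj) v

lemma lead {f : E → F} {x : E} {p : FormalMultilinearSeries ℂ E F}
    (hp : HasFPowerSeriesAt f p x) {n : ℕ} (hf : B f x n) :
    (fun v => f (x + v) - p n (fun _ => v)) =O[𝓝 0] fun v : E => ‖v‖ ^ (n + 1) := by
  refine (hp.isBigO_sub_partialSum_pow (n + 1)).congr_left ?_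
  intro v
  simp only [FormalMultilinearSeries.partialSum, Finset.sum_range_succ]
  rw [Finset.sum_eq_zero, zero_add]
  intro j hj
  exact diag_of_B hp hf j (Finset.mem_range.1 hj) v

lemma iteratedFDeriv_of_B [CompleteSpace F] {f : E → F} {x : E} (hfa : AnalyticAt ℂ f x) {n : ℕ}
    (hf : B f x n) : ∀ i < n, iteratedFDeriv ℂ i f x = 0 := by
  obtain ⟨p, r, hp⟩ := hfa
  have hd := diag_of_B ⟨r, hp⟩ hf
  let q : FormalMultilinearSeries ℂ E F := fun i => if i < n then 0 else p i
  have hq : HasFPowerSeriesOnBall f q x r := by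
    refine ⟨hp.r_le.trans ?_, hp.r_pos, ?_⟩
    · apply ENNReal.le_of_forall_nnreal_lt
      intro s hs
      obtain ⟨C, hC, h⟩ := p.norm_mul_pow_le_of_lt_radius hs
      apply q.le_radius_of_bound C
      intro i
      by_cases hi : i < n
      · simp [q, hi, hC.le]
      · simpa [q, hi] using h i
    · intro y hy
      convert hp.hasSum hy using 2 with i
      by_cases hi : i < n
      · simp [q, hi, hd i hi]
      · simp [q, hi]
  intro i hi
  ext v
  rw [hq.iteratedFDeriv_eq_sum_of_completeSpace]
  simp [q, hi]

lemma B_of_iteratedFDeriv [CompleteSpace F] {f : E → F} {x : E} (hfa : AnalyticAt ℂ f x) {n : ℕ}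
    (h : ∀ i < n, iteratedFDeriv ℂ i f x = 0) : B f x n := by
  obtain ⟨p, r, hp⟩ := hfa
  refine B_of_diag ⟨r, hp⟩ ?_
  intro i hi v
  have := hp.factorial_smul v i
  rw [h i hi, ← Nat.cast_smul_eq_nsmul ℂ] at this
  have h2 : (i.factorial : ℂ) ≠ 0 := by exact_mod_cast i.factorial_ne_zero
  simpa [h2] using this

lemma B_fderiv [CompleteSpace F] {f : E → F} {x : E} (hfa : AnalyticAt ℂ f x) {n : ℕ}
    (h : B f x (n + 1)) : B (fderiv ℂ f) x n := by
  apply B_of_iteratedFDeriv hfa.fderiv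
  intro i hi
  rw [← norm_eq_zero, norm_iteratedFDeriv_fderiv, norm_eq_zero]
  exact iteratedFDeriv_of_B hfa h _ (by omega)

lemma homog {ψ : E → ℂ} {n : ℕ} (hh : ∀ (t : ℂ) v, ψ (t • v) = t ^ n * ψ v)
    (h : ψ =O[𝓝 0] fun v : E => ‖v‖ ^ (n + 1)) (v : E) : ψ v = 0 := by
  have hk : Tendsto (fun t : ℂ => t • v) (𝓝 0) (𝓝 0) := by
    have : Continuous (fun t : ℂ => t • v) := by fun_prop
    simpa using this.tendsto 0
  have h1 := h.comp_tendsto hk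
  have h2 : (fun t : ℂ => (ContinuousMultilinearMap.mkPiRing ℂ (Fin n) (ψ v)) fun _ => t)
      =O[𝓝 0] fun t => ‖t‖ ^ (n + 1) := by
    have h3 : (fun t : ℂ => ‖t • v‖ ^ (n + 1)) =O[𝓝 0] fun t => ‖t‖ ^ (n + 1) := by
      simp only [norm_smul, mul_pow]
      simp only [mul_comm _ (‖v‖ ^ (n + 1))]
      exact (isBigO_refl _ _).const_mul_left _
    refine (h1.trans h3).congr_left ?_
    intro t
    simp [hh]
  simpa using h2.continuousMultilinearMap_apply_eq_zero 1

lemma B_div {f h : E → ℂ} {x : E} (hfa : AnalyticAt ℂ f x) (hha : AnalyticAt ℂ h x) {j : ℕ}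
    (hj : iteratedFDeriv ℂ j f x ≠ 0) (hj' : ∀ i < j, iteratedFDeriv ℂ i f x = 0) {N : ℕ}
    (hfh : B (fun z => f z * h z) x (N + j)) : B h x N := by
  induction N with
  | zero =>
    obtain ⟨p, hp⟩ := hha
    exact B_of_diag hp (by simp)
  | succ N ih =>
    have hN : B h x N := ih (hfh.mono (by omega))
    have hB : B f x j := B_of_iteratedFDeriv hfa hj'
    have hnB : ¬ B f x (j + 1) := fun hc => hj (iteratedFDeriv_of_B hfa hc j (by omega))
    obtain ⟨p, hp⟩ := hfa
    obtain ⟨q, hq⟩ := hha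
    have hP : ∃ v, p j (fun _ => v) ≠ 0 := by
      by_contra! hc
      apply hnB
      refine B_of_diag hp ?_
      intro i hi v
      rcases Nat.lt_succ_iff_lt_or_eq.1 hi with h1 | rfl
      · exact diag_of_B hp hB i h1 v
      · exact hc v
    have hPQ : ∀ v, p j (fun _ => v) * q N (fun _ => v) = 0 := by
      apply homog (n := j + N)
      · intro t v
        have e1 := (p j).map_smul_univ (fun _ => t) (fun _ => v)
        have e2 := (q N).map_smul_univ (fun _ => t) (fun _ => v)
        simp only [Finset.prod_const, Finset.card_univ, Fintype.card_fin, smul_eq_mul] at e1 e2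
        rw [e1, e2]
        ring
      · have l1 := lead hp hB
        have l2 := lead hq hN
        -- PQ = f h - (f - P) h - P (h - Q)
        have bP : (fun v => p j (fun _ => v)) =O[𝓝 0] fun v : E => ‖v‖ ^ j := by
          refine (IsBigO.sub hB (l1.trans (pow_isBigO (Nat.le_succ j)))).congr_left ?_
          intro v; simp
        have t1 := l1.mul hN
        have t2 := bP.mul l2
        have t0 : (fun v => f (x + v) * h (x + v)) =O[𝓝 0] fun v : E => ‖v‖ ^ (j + N + 1) := by
          have := hfh
          rw [show N + 1 + j = j + N + 1 by ring] at this
          exact this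
        have c1 : (fun v : E => ‖v‖ ^ (j + 1) * ‖v‖ ^ N) = fun v : E => ‖v‖ ^ (j + N + 1) := by
          ext v; ring
        have c2 : (fun v : E => ‖v‖ ^ j * ‖v‖ ^ (N + 1)) = fun v : E => ‖v‖ ^ (j + N + 1) := by
          ext v; ring
        rw [c1] at t1
        rw [c2] at t2
        refine ((t0.sub t1).sub t2).congr_left ?_
        intro v; ring
    have hQ : (fun v => q N (fun _ => v)) = fun _ => 0 := by
      obtain ⟨v0, hv0⟩ := hP
      have an : AnalyticOnNhd ℂ (fun v : E => q N (fun _ => v)) Set.univ := by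
        intro v _
        exact ((q N).analyticAt (x := fun _ => v)).comp
          ((ContinuousLinearMap.pi fun _ : Fin N => ContinuousLinearMap.id ℂ E).analyticAt v)
      have hc : Continuous fun v : E => p j (fun _ => v) :=
        (p j).cont.comp (continuous_pi fun _ => continuous_id)
      refine an.eq_of_eventuallyEq (z₀ := v0) analyticOnNhd_const ?_
      filter_upwards [hc.continuousAt.eventually_ne hv0] with v hv
      exact (mul_eq_zero.1 (hPQ v)).resolve_left hv
    refine B_of_diag hq ?_
    intro i hi v
    rcases Nat.lt_succ_iff_lt_or_eq.1 hi with h1 | rfl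
    · exact diag_of_B hq hN i h1 v
    · exact congrFun hQ v

end

lemma main {k : ℕ} {g : (Fin k → ℂ) → (Fin k → ℂ)} {x : Fin k → ℂ} (hg : AnalyticAt ℂ g x)
    {J : (Fin k → ℂ) → ℂ} (hJ : ∀ z, J z = (fderiv ℂ g z).det) {j : ℕ}
    (hJa : AnalyticAt ℂ J x)
    (hj : iteratedFDeriv ℂ j J x ≠ 0) (hj' : ∀ i < j, iteratedFDeriv ℂ i J x = 0) (m : ℕ) :
    ∀ (φ : (Fin k → ℂ) → ℂ), AnalyticAt ℂ φ (g x) → iteratedFDeriv ℂ m φ (g x) ≠ 0 →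
    ∀ N, B (φ ∘ g) x N → N ≤ m * (1 + j) := by
  induction m with
  | zero =>
    intro φ hφ h0 N hB
    by_contra hN
    apply h0
    have h1 : iteratedFDeriv ℂ 0 (φ ∘ g) x = 0 :=
      iteratedFDeriv_of_B (hφ.comp hg) hB 0 (by omega)
    ext v
    have := congrArg (fun T => T v) h1
    simpa using this
  | succ m ih =>
    intro φ hφ h0 N hB
    by_cases hN : N ≤ 1 + j
    · nlinarith
    obtain ⟨N', rfl⟩ : ∃ N', N = N' + j + 1 := ⟨N - (j + 1), by omega⟩
    obtain ⟨w, hw⟩ : ∃ w, iteratedFDeriv ℂ (m + 1) φ (g x) w ≠ 0 := by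
      by_contra! hc
      exact h0 (by ext v; simpa using hc v)
    rw [iteratedFDeriv_succ_apply_right] at hw
    set u := w (Fin.last m)
    have hφ' : AnalyticAt ℂ (fderiv ℂ φ) (g x) := hφ.fderiv
    let L : ((Fin k → ℂ) →L[ℂ] ℂ) →L[ℂ] ℂ := ContinuousLinearMap.apply ℂ ℂ u
    have hψa : AnalyticAt ℂ (L ∘ fderiv ℂ φ) (g x) := (L.analyticAt _).comp hφ'
    have hψ : iteratedFDeriv ℂ m (L ∘ fderiv ℂ φ) (g x) ≠ 0 := by
      intro hc
      apply hw
      rw [L.iteratedFDeriv_comp_left (hφ'.contDiffAt (n := m)) le_rfl] at hc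
      have := congrArg (fun T => T (Fin.init w)) hc
      simpa [L] using this
    have key : N' ≤ m * (1 + j) := by
      refine ih _ hψa hψ N' ?_
      refine B_div hJa (hψa.comp hg) hj hj' ?_
      have hd : B (fderiv ℂ (φ ∘ g)) x (N' + j) := B_fderiv (hφ.comp hg) hB
      let A : (Fin k → ℂ) → Matrix (Fin k) (Fin k) ℂ := fun z =>
        LinearMap.toMatrix' (fderiv ℂ g z : (Fin k → ℂ) →ₗ[ℂ] (Fin k → ℂ))
      let a : (Fin k → ℂ) → (Fin k → ℂ) := fun z => (A z).adjugate.mulVec u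
      have hAc : ContinuousAt A x := by
        have c1 : ContinuousAt (fderiv ℂ g) x := hg.fderiv.continuousAt
        let T : ((Fin k → ℂ) →L[ℂ] (Fin k → ℂ)) →ₗ[ℂ] Matrix (Fin k) (Fin k) ℂ :=
          (LinearMap.toMatrix' (R := ℂ) (m := Fin k) (n := Fin k)).toLinearMap ∘ₗ
            ContinuousLinearMap.coeLM ℂ
        have c2 : Continuous T := T.continuous_of_finiteDimensional
        exact c2.continuousAt.comp c1
      have hac : ContinuousAt a x := by
        have c : Continuous fun M : Matrix (Fin k) (Fin k) ℂ => M.adjugate.mulVec u :=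
          (Continuous.matrix_adjugate continuous_id).matrix_mulVec continuous_const
        exact c.continuousAt.comp hAc
      have htr : Tendsto (fun v : Fin k → ℂ => x + v) (𝓝 0) (𝓝 x) := by
        have : Continuous (fun v : Fin k → ℂ => x + v) := by fun_prop
        simpa using this.tendsto 0
      have hab : (fun v => a (x + v)) =O[𝓝 0] fun _ => (1 : ℝ) :=
        (hac.tendsto.comp htr).isBigO_one ℝ
      have hmul : (fun v => fderiv ℂ (φ ∘ g) (x + v) (a (x + v))) =O[𝓝 0]
          fun v => ‖v‖ ^ (N' + j) := by
        have h1 := hd.norm_left.mul hab.norm_left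
        simp only [mul_one] at h1
        refine IsBigO.trans (IsBigO.of_bound 1 (Eventually.of_forall fun v => ?_)) h1
        rw [one_mul]
        refine (ContinuousLinearMap.le_opNorm _ _).trans ?_
        exact le_abs_self _
      refine hmul.congr' ?_ EventuallyEq.rfl
      have e1 : ∀ᶠ z in 𝓝 x, AnalyticAt ℂ g z := hg.eventually_analyticAt
      have e2 : ∀ᶠ z in 𝓝 x, AnalyticAt ℂ φ (g z) :=
        hg.continuousAt.eventually hφ.eventually_analyticAt
      filter_upwards [htr.eventually e1, htr.eventually e2] with v h1 h2
      have hcomp : fderiv ℂ (φ ∘ g) (x + v) = (fderiv ℂ φ (g (x + v))).comp (fderiv ℂ g (x + v)) :=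
        fderiv_comp _ h2.differentiableAt h1.differentiableAt
      have hadj : fderiv ℂ g (x + v) (a (x + v)) = J (x + v) • u := by
        have : fderiv ℂ g (x + v) (a (x + v)) = (A (x + v)).mulVec (a (x + v)) := by
          rw [← Matrix.toLin'_apply, Matrix.toLin'_toMatrix']
          rfl
        rw [this, Matrix.mulVec_mulVec, Matrix.mul_adjugate, Matrix.smul_mulVec, Matrix.one_mulVec,
          hJ, LinearMap.det_toMatrix']
      rw [hcomp, ContinuousLinearMap.comp_apply, hadj, map_smul]
      rfl
    nlinarith

lemma ordAt_spec {E F : Type*} [NormedAddCommGroup E] [NormedSpace ℂ E]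
    [NormedAddCommGroup F] [NormedSpace ℂ F] {f : E → F} {p : E} (h : ordAt f p ≠ ⊤) :
    ∃ n : ℕ, ordAt f p = n ∧ iteratedFDeriv ℂ n f p ≠ 0 ∧
      ∀ i < n, iteratedFDeriv ℂ i f p = 0 := by
  have hne : ((fun n : ℕ => (n : ℕ∞)) '' {n : ℕ | iteratedFDeriv ℂ n f p ≠ 0}).Nonempty := by
    by_contra hc
    rw [Set.not_nonempty_iff_eq_empty] at hc
    exact h (by rw [ordAt, hc, sInf_empty])
  obtain ⟨n, hn, hn'⟩ := csInf_mem hne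
  refine ⟨n, hn'.symm, hn, ?_⟩
  intro i hi
  by_contra hc
  have : ordAt f p ≤ (i : ℕ∞) := sInf_le ⟨i, hc, rfl⟩
  have h2 : (n : ℕ∞) ≤ i := le_trans hn'.le this
  have : n ≤ i := by exact_mod_cast h2
  omega

lemma det_analytic {k : ℕ} {g : (Fin k → ℂ) → (Fin k → ℂ)} {x : Fin k → ℂ}
    (hg : AnalyticAt ℂ g x) : AnalyticAt ℂ (fun z => (fderiv ℂ g z).det) x := by
  have h : (fun z => (fderiv ℂ g z).det) = fun z =>
      ∑ σ : Equiv.Perm (Fin k), ((Equiv.Perm.sign σ : ℤ) : ℂ) *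
        ∏ i, fderiv ℂ g z (Pi.single i 1) (σ i) := by
    ext z
    have : (fderiv ℂ g z).det = (LinearMap.toMatrix'
        (fderiv ℂ g z : (Fin k → ℂ) →ₗ[ℂ] (Fin k → ℂ))).det := by
      rw [LinearMap.det_toMatrix']
    rw [this, Matrix.det_apply']
    simp [LinearMap.toMatrix'_apply]
  rw [h]
  refine Finset.analyticAt_fun_sum _ fun σ _ => ?_
  refine analyticAt_const.mul ?_
  refine Finset.analyticAt_fun_prod _ fun i _ => ?_
  let L : ((Fin k → ℂ) →L[ℂ] (Fin k → ℂ)) →L[ℂ] ℂ :=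
    (ContinuousLinearMap.proj (σ i)).comp
      (ContinuousLinearMap.apply ℂ (Fin k → ℂ) (Pi.single i (1 : ℂ)))
  exact (L.analyticAt _).comp hg.fderiv

end OrdAux



/-- smooth case of Theorem 3.7: if `g` is analytic on an open set
`U ⊆ ℂ^k`, `x ∈ U`, `y = g x`, the Jacobian determinant `J` of `g` has finite order of
vanishing at `x`, and `φ` is analytic near `y` with finite order of vanishing, then
`ord_x(φ ∘ g) ≤ (k + ord_x J) · ord_y φ`. -/
theorem ordAt_comp_le_of_jacobian
    (k : ℕ) (hk : 1 ≤ k) (U : Set (Fin k → ℂ)) (hU : IsOpen U)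
    (g : (Fin k → ℂ) → (Fin k → ℂ)) (hg : ∀ z ∈ U, AnalyticAt ℂ g z)
    (x : Fin k → ℂ) (hx : x ∈ U) (y : Fin k → ℂ) (hy : y = g x)
    (J : (Fin k → ℂ) → ℂ) (hJ : ∀ z, J z = (fderiv ℂ g z).det)
    (hJx : ordAt J x ≠ ⊤)
    (φ : (Fin k → ℂ) → ℂ) (hφ : AnalyticAt ℂ φ y) (hφy : ordAt φ y ≠ ⊤) :
    ordAt (φ ∘ g) x ≤ ((k : ℕ∞) + ordAt J x) * ordAt φ y := by
  subst hy
  obtain ⟨j, hj, hj1, hj2⟩ := OrdAux.ordAt_spec hJx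
  obtain ⟨m, hm, hm1, -⟩ := OrdAux.ordAt_spec hφy
  have hga := hg x hx
  have hJa : AnalyticAt ℂ J x := by
    rw [funext hJ]
    exact OrdAux.det_analytic hga
  have hmain := OrdAux.main hga hJ hJa hj1 hj2 m φ hφ hm1
  have hex : ∃ i ≤ m * (1 + j), iteratedFDeriv ℂ i (φ ∘ g) x ≠ 0 := by
    by_contra! hc
    have := hmain (m * (1 + j) + 1)
      (OrdAux.B_of_iteratedFDeriv (hφ.comp hga) fun i hi => hc i (by omega))
    omega
  obtain ⟨i, hi, hi'⟩ := hex
  have h1 : ordAt (φ ∘ g) x ≤ (i : ℕ∞) := sInf_le ⟨i, hi', rfl⟩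
  refine h1.trans ?_
  rw [hj, hm]
  have h2 : i ≤ (k + j) * m := by nlinarith
  exact_mod_cast h2
end

section
/- Let k ≥ 1 and let g : ℂ^k → ℂ^k be complex-analytic on all of ℂ^k such that the Jacobian determinant z ↦ det(Dg(z)) is not identically zero. For n ≥ 1 and x ∈ ℂ^k set μ_n(x) := k + ord_x(det D(g^n)), where g^n is the n-fold iterate of g. Then for every n ≥ 1 the function det D(g^n) is not identically zero, every μ_n(x) is finite, and for every complex-analytic h : ℂ^k → ℂ not identically zero and every x ∈ ℂ^k one has ord_x(h ∘ g^n) ≤ μ_n(x) · ord_{g^n(x)}(h). -/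
open scoped ContDiff

namespace JCC

/-- Vanishing to order at least `n`. -/
def V {E F : Type*} [NormedAddCommGroup E] [NormedSpace ℂ E]
    [NormedAddCommGroup F] [NormedSpace ℂ F] (n : ℕ) (f : E → F) (p : E) : Prop :=
  ∀ i < n, iteratedFDeriv ℂ i f p = 0

section
variable {E F : Type*} [NormedAddCommGroup E] [NormedSpace ℂ E]
    [NormedAddCommGroup F] [NormedSpace ℂ F]

lemma le_ordAt {f : E → F} {p : E} {n : ℕ} : (n : ℕ∞) ≤ ordAt f p ↔ V n f p := by
  unfold ordAt V
  rw [le_sInf_iff]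
  constructor
  · intro h i hi
    by_contra hne
    have := h i ⟨i, hne, rfl⟩
    have := Nat.cast_le.1 this
    omega
  · rintro h _ ⟨i, hi, rfl⟩
    by_contra hlt
    have : i < n := by
      have := not_le.1 hlt
      exact Nat.cast_lt.1 this
    exact hi (h i this)

lemma ordAt_le {f : E → F} {p : E} {n : ℕ} (h : iteratedFDeriv ℂ n f p ≠ 0) :
    ordAt f p ≤ n := sInf_le ⟨n, h, rfl⟩

lemma ordAt_eq {f : E → F} {p : E} {n : ℕ} (h : ordAt f p = n) :
    V n f p ∧ iteratedFDeriv ℂ n f p ≠ 0 := by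
  have h1 : V n f p := le_ordAt.1 h.ge
  refine ⟨h1, fun h0 => ?_⟩
  have : ((n + 1 : ℕ) : ℕ∞) ≤ ordAt f p := by
    rw [le_ordAt]
    intro i hi
    rcases Nat.lt_succ_iff_lt_or_eq.1 hi with h' | rfl
    · exact h1 i h'
    · exact h0
  rw [h] at this
  have := Nat.cast_le.1 this
  omega

lemma ordAt_ne_top_iff {f : E → F} {p : E} :
    ordAt f p ≠ ⊤ ↔ ∃ n, iteratedFDeriv ℂ n f p ≠ 0 := by
  constructor
  · intro h
    obtain ⟨n, hn⟩ := ENat.ne_top_iff_exists.1 h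
    exact ⟨n, (ordAt_eq hn.symm).2⟩
  · rintro ⟨n, hn⟩ h
    have := ordAt_le hn
    rw [h] at this
    simp at this

lemma ordAt_ne_top [CompleteSpace F] {f : E → F} (hf : ContDiff ℂ ω f) (hne : ∃ z, f z ≠ 0) (p : E) :
    ordAt f p ≠ ⊤ := by
  rw [ordAt_ne_top_iff]
  by_contra! hz
  have han : AnalyticOnNhd ℂ f Set.univ := fun z _ => (hf.contDiffAt).analyticAt
  obtain ⟨q, r, hq⟩ := han p (Set.mem_univ _)
  have hev : f =ᶠ[nhds p] 0 := by
    filter_upwards [Metric.eball_mem_nhds p hq.r_pos] with y hy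
    have := hq.hasSum_iteratedFDeriv (y := y - p) (by simpa [edist_eq_enorm_sub] using hy)
    simp only [hz, zero_apply, smul_zero, add_sub_cancel] at this
    exact this.unique hasSum_zero
  have := han.eqOn_zero_of_preconnected_of_eventuallyEq_zero isPreconnected_univ
    (Set.mem_univ p) hev
  obtain ⟨z, hz⟩ := hne
  exact hz (this (Set.mem_univ z))

lemma exists_diag {f : E → F} (hf : ContDiff ℂ ω f) {p : E} {n : ℕ}
    (h : iteratedFDeriv ℂ n f p ≠ 0) : ∃ v, iteratedFDeriv ℂ n f p (fun _ => v) ≠ 0 := by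
  by_contra! hz
  apply h
  ext v
  have h1 := (iteratedFDeriv ℂ n f p).iteratedFDeriv_comp_diagonal 0 v
  have h2 : (fun z => iteratedFDeriv ℂ n f p (fun _ => z)) = fun _ => (0 : F) := funext hz
  rw [h2] at h1
  have h3 : ∀ σ : Equiv.Perm (Fin n), iteratedFDeriv ℂ n f p (fun i => v (σ i))
      = iteratedFDeriv ℂ n f p v := fun σ => hf.contDiffAt.iteratedFDeriv_comp_perm v σ
  simp only [h3, Finset.sum_const] at h1
  have h4 : iteratedFDeriv ℂ n (fun _ : E => (0 : F)) 0 = 0 := by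
    have := iteratedFDeriv_fun_zero (𝕜 := ℂ) (E := E) (F := F) (n := n)
    exact congrFun this 0
  rw [h4] at h1
  simp only [zero_apply] at h1 ⊢
  have h5 := h1.symm
  rw [← Nat.cast_smul_eq_nsmul ℂ] at h5
  rcases smul_eq_zero.1 h5 with h6 | h6
  · simp [Fintype.card_perm, Nat.factorial_ne_zero] at h6
  · exact h6

lemma iteratedDeriv_line {f : E → F} (hf : ContDiff ℂ ω f) (p v : E) (n : ℕ) :
    iteratedDeriv n (fun t : ℂ => f (p + t • v))
      = fun t => iteratedFDeriv ℂ n f (p + t • v) (fun _ => v) := by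
  induction n with
  | zero => ext t; simp
  | succ n ih =>
    rw [iteratedDeriv_succ, ih]
    ext t
    exact ContDiffAt.deriv_fderiv_add_smul (hf.of_le le_top).contDiffAt

lemma line_contDiff {f : E → F} (hf : ContDiff ℂ ω f) (p v : E) :
    ContDiff ℂ ω (fun t : ℂ => f (p + t • v)) := by
  apply hf.comp
  fun_prop

lemma mul_ne {f g : E → ℂ} (hf : ContDiff ℂ ω f) (hg : ContDiff ℂ ω g) {p : E} {a b : ℕ}
    (hfa : V a f p) (hfa' : iteratedFDeriv ℂ a f p ≠ 0)
    (hgb : V b g p) (hgb' : iteratedFDeriv ℂ b g p ≠ 0) :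
    iteratedFDeriv ℂ (a + b) (fun z => f z * g z) p ≠ 0 := by
  obtain ⟨v₁, hv₁⟩ := exists_diag hf hfa'
  obtain ⟨v₂, hv₂⟩ := exists_diag hg hgb'
  -- a common direction
  obtain ⟨v, hv, hv'⟩ : ∃ v, iteratedFDeriv ℂ a f p (fun _ => v) ≠ 0 ∧
      iteratedFDeriv ℂ b g p (fun _ => v) ≠ 0 := by
    by_contra! hcon
    set A : E → ℂ := fun v => iteratedFDeriv ℂ a f p (fun _ => v) with hA
    set B : E → ℂ := fun v => iteratedFDeriv ℂ b g p (fun _ => v) with hB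
    have hAc : ContDiff ℂ ω A :=
      (iteratedFDeriv ℂ a f p).contDiff.comp (contDiff_pi.2 fun _ => contDiff_id)
    have hBc : ContDiff ℂ ω B :=
      (iteratedFDeriv ℂ b g p).contDiff.comp (contDiff_pi.2 fun _ => contDiff_id)
    have hBan : AnalyticOnNhd ℂ B Set.univ := fun z _ => (hBc.contDiffAt).analyticAt
    have hev : B =ᶠ[nhds v₁] 0 := by
      filter_upwards [hAc.continuous.continuousAt.eventually_ne hv₁] with y hy
      exact hcon y hy
    exact hv₂ (hBan.eqOn_zero_of_preconnected_of_eventuallyEq_zero isPreconnected_univ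
      (Set.mem_univ v₁) hev (Set.mem_univ v₂))
  intro h0
  have key := congrFun (iteratedDeriv_line (hf.mul hg) p v (a + b)) 0
  simp only [zero_smul, add_zero, h0, zero_apply] at key
  rw [iteratedDeriv_fun_mul ((line_contDiff hf p v).of_le le_top).contDiffAt
    ((line_contDiff hg p v).of_le le_top).contDiffAt] at key
  simp only [iteratedDeriv_line hf, iteratedDeriv_line hg, zero_smul, add_zero] at key
  rw [Finset.sum_eq_single_of_mem a (by simp)] at key
  · have hc : ((a + b).choose a : ℂ) ≠ 0 := by
      exact_mod_cast (Nat.choose_pos (Nat.le_add_right a b)).ne'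
    rw [Nat.add_sub_cancel_left] at key
    exact mul_ne_zero (mul_ne_zero hc hv) hv' key
  · intro i hi hne
    rcases lt_or_gt_of_ne hne with h | h
    · simp [hfa i h]
    · have : a + b - i < b := by
        simp at hi; omega
      simp [hgb _ this]

lemma V_mul {f g : E → ℂ} (hf : ContDiff ℂ ω f) (hg : ContDiff ℂ ω g) {p : E} {n : ℕ}
    (h : V n f p) : V n (fun z => f z * g z) p := by
  intro i hi
  have := norm_iteratedFDeriv_mul_le (hf) hg p (n := i) le_top
  rw [Finset.sum_eq_zero] at this
  · simpa using this
  · intro l hl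
    have : l < n := by simp at hl; omega
    simp [h l this]

lemma V_sum {ι : Type*} {s : Finset ι} {f : ι → E → ℂ} (hf : ∀ i, ContDiff ℂ ω (f i)) {p : E}
    {n : ℕ} (h : ∀ i, V n (f i) p) : V n (fun z => ∑ i ∈ s, f i z) p := by
  intro m hm
  rw [iteratedFDeriv_fun_sum_apply (fun i _ => ((hf i).of_le le_top).contDiffAt)]
  simp [h _ m hm]

lemma V_fderiv {f : E → F} (hf : ContDiff ℂ ω f) {p : E} {n : ℕ} (h : V n f p) (v : E) :
    V (n - 1) (fun z => fderiv ℂ f z v) p := by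
  intro i hi
  have h1 := norm_iteratedFDeriv_fderiv (𝕜 := ℂ) (f := f) (x := p) (n := i)
  rw [h (i + 1) (by omega), norm_zero, norm_eq_zero] at h1
  have hc : ContDiff ℂ ω (fderiv ℂ f) := hf.fderiv_right le_top
  have h2 := (ContinuousLinearMap.apply ℂ F v).iteratedFDeriv_comp_left
    (hc.contDiffAt (x := p)) (i := i) le_top
  rw [h1] at h2
  have h3 : (ContinuousLinearMap.apply ℂ F v) ∘ fderiv ℂ f = fun z => fderiv ℂ f z v := rfl
  rw [h3] at h2
  rw [h2]
  ext; simp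

end

variable {k : ℕ}

lemma exists_partial {h : (Fin k → ℂ) → ℂ} (hh : ContDiff ℂ ω h) {p : Fin k → ℂ} {n : ℕ}
    (hn : iteratedFDeriv ℂ (n + 1) h p ≠ 0) :
    ∃ l : Fin k, iteratedFDeriv ℂ n (fun z => fderiv ℂ h z (Pi.single l 1)) p ≠ 0 := by
  by_contra! hcon
  apply hn
  ext m
  rw [iteratedFDeriv_succ_apply_right]
  have hc : ContDiff ℂ ω (fderiv ℂ h) := hh.fderiv_right le_top
  have key : ∀ l : Fin k, ∀ w, iteratedFDeriv ℂ n (fderiv ℂ h) p w (Pi.single l 1) = 0 := by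
    intro l w
    have h2 := (ContinuousLinearMap.apply ℂ ℂ (Pi.single l 1 : Fin k → ℂ)).iteratedFDeriv_comp_left
      (hc.contDiffAt (x := p)) (i := n) le_top
    have h3 : (ContinuousLinearMap.apply ℂ ℂ (Pi.single l 1 : Fin k → ℂ)) ∘ fderiv ℂ h
      = fun z => fderiv ℂ h z (Pi.single l 1) := rfl
    rw [h3, hcon l] at h2
    have := congrArg (fun q => q w) h2
    simpa using this.symm
  have : iteratedFDeriv ℂ n (fderiv ℂ h) p (Fin.init m) = 0 := by
    apply ContinuousLinearMap.coe_injective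
    apply (Pi.basisFun ℂ (Fin k)).ext
    intro l
    simpa using key l (Fin.init m)
  rw [this]; rfl

lemma det_eq (L : (Fin k → ℂ) →L[ℂ] (Fin k → ℂ)) :
    L.det = (Matrix.of fun i l => L (Pi.single l 1) i).det := by
  rw [ContinuousLinearMap.det, ← LinearMap.det_toMatrix']
  congr 1

lemma entry_contDiff {G : (Fin k → ℂ) → (Fin k → ℂ)} (hG : ContDiff ℂ ω G) (i l : Fin k) :
    ContDiff ℂ ω (fun z => fderiv ℂ G z (Pi.single l 1) i) := by
  have hc : ContDiff ℂ ω (fderiv ℂ G) := hG.fderiv_right le_top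
  have : ContDiff ℂ ω (fun z => fderiv ℂ G z (Pi.single l 1)) := hc.clm_apply contDiff_const
  exact contDiff_pi.1 this i

lemma det_contDiff {E : Type*} [NormedAddCommGroup E] [NormedSpace ℂ E]
    {M : E → Matrix (Fin k) (Fin k) ℂ}
    (hM : ∀ i l, ContDiff ℂ ω (fun z => M z i l)) : ContDiff ℂ ω (fun z => (M z).det) := by
  simp only [Matrix.det_apply]
  refine ContDiff.sum fun σ _ => ?_
  refine ContDiff.const_smul _ ?_
  exact contDiff_prod fun i _ => hM _ _

lemma J_contDiff {G : (Fin k → ℂ) → (Fin k → ℂ)} (hG : ContDiff ℂ ω G) :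
    ContDiff ℂ ω (fun z => (fderiv ℂ G z).det) := by
  simp only [det_eq]
  exact det_contDiff fun i l => entry_contDiff hG i l

lemma core {G : (Fin k → ℂ) → (Fin k → ℂ)} (hk : 1 ≤ k) (hG : ContDiff ℂ ω G) {x : Fin k → ℂ}
    {j : ℕ} (hj : V j (fun z => (fderiv ℂ G z).det) x)
    (hj' : iteratedFDeriv ℂ j (fun z => (fderiv ℂ G z).det) x ≠ 0) (c : ℕ) :
    ∀ (h : (Fin k → ℂ) → ℂ), ContDiff ℂ ω h → iteratedFDeriv ℂ c h (G x) ≠ 0 →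
    ∀ m, V m (h ∘ G) x → m ≤ (k + j) * c := by
  induction c with
  | zero =>
    intro h hh hne m hm
    rcases Nat.eq_zero_or_pos m with rfl | hpos
    · simp
    · exfalso
      apply hne
      have := hm 0 hpos
      ext w
      have := congrArg (fun q => q (fun i => Fin.elim0 i)) this
      simpa using this
  | succ c ih =>
    intro h hh hne m hm
    obtain ⟨l, hl⟩ := exists_partial hh hne
    set u : (Fin k → ℂ) → ℂ := fun z => fderiv ℂ h z (Pi.single l 1) with hu
    have huc : ContDiff ℂ ω u := (hh.fderiv_right le_top).clm_apply contDiff_const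
    have hGd : Differentiable ℂ G := hG.differentiable (by simp)
    have hhd : Differentiable ℂ h := hh.differentiable (by simp)
    have hcomp : ContDiff ℂ ω (h ∘ G) := hh.comp hG
    let M : (Fin k → ℂ) → Matrix (Fin k) (Fin k) ℂ :=
      fun z => Matrix.of fun i l => fderiv ℂ G z (Pi.single l 1) i
    have hM : ∀ i l, ContDiff ℂ ω (fun z => M z i l) := fun i l => entry_contDiff hG i l
    have hadj : ∀ i l, ContDiff ℂ ω (fun z => (M z).adjugate i l) := by
      intro i l
      simp only [Matrix.adjugate_apply]
      apply det_contDiff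
      intro a b
      by_cases hab : a = l
      · subst hab; simp only [Matrix.updateRow_self]; exact contDiff_const
      · simp only [Matrix.updateRow_ne hab]; exact hM a b
    have hchain : ∀ z i, fderiv ℂ (h ∘ G) z (Pi.single i 1)
        = ∑ a, fderiv ℂ h (G z) (Pi.single a 1) * M z a i := by
      intro z i
      rw [fderiv_comp z (hhd _) (hGd _)]
      simp only [ContinuousLinearMap.comp_apply]
      conv_lhs => rw [pi_eq_sum_univ' (fderiv ℂ G z (Pi.single i 1))]
      rw [map_sum]
      refine Finset.sum_congr rfl fun a _ => ?_
      rw [map_smul, smul_eq_mul, mul_comm]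
      rfl
    have hid : ∀ z, (fderiv ℂ G z).det * (u ∘ G) z
        = ∑ i, fderiv ℂ (h ∘ G) z (Pi.single i 1) * (M z).adjugate i l := by
      intro z
      have e1 : (fderiv ℂ (h ∘ G) z <| Pi.single · 1) =
          Matrix.vecMul (fun a => fderiv ℂ h (G z) (Pi.single a 1)) (M z) := by
        ext i; rw [hchain]; rfl
      have e2 : ∑ i, fderiv ℂ (h ∘ G) z (Pi.single i 1) * (M z).adjugate i l
        = Matrix.vecMul (fun i => fderiv ℂ (h ∘ G) z (Pi.single i 1)) (M z).adjugate l := rfl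
      rw [e2, e1, Matrix.vecMul_vecMul, Matrix.mul_adjugate, Matrix.vecMul_smul,
        Matrix.vecMul_one, det_eq]
      rfl
    have hV : V (m - 1) (fun z => (fderiv ℂ G z).det * (u ∘ G) z) x := by
      simp only [hid]
      have hd : ∀ i : Fin k, ContDiff ℂ ω fun z => fderiv ℂ (h ∘ G) z (Pi.single i 1) :=
        fun i => (hcomp.fderiv_right le_top).clm_apply contDiff_const
      exact V_sum (fun i => (hd i).mul (hadj i l))
        (fun i => V_mul (hd i) (hadj i l) (V_fderiv hcomp hm _))
    have hVu : V (m - 1 - j) (u ∘ G) x := by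
      by_contra hcon
      rw [← le_ordAt, not_le] at hcon
      obtain ⟨b, hb⟩ := ENat.ne_top_iff_exists.1 hcon.ne_top
      rw [← hb] at hcon
      have hb' := Nat.cast_lt.1 hcon
      obtain ⟨hb1, hb2⟩ := ordAt_eq hb.symm
      exact mul_ne (J_contDiff hG) (huc.comp hG) hj hj' hb1 hb2 (hV (j + b) (by omega))
    have := ih u huc hl _ hVu
    rw [Nat.mul_succ]
    omega

lemma main_ineq {G : (Fin k → ℂ) → (Fin k → ℂ)} (hk : 1 ≤ k) (hG : ContDiff ℂ ω G)
    {x : Fin k → ℂ} (hJ : ordAt (fun z => (fderiv ℂ G z).det) x ≠ ⊤)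
    {h : (Fin k → ℂ) → ℂ} (hh : ContDiff ℂ ω h) (hx : ordAt h (G x) ≠ ⊤) :
    ordAt (h ∘ G) x ≤ ((k : ℕ∞) + ordAt (fun z => (fderiv ℂ G z).det) x) * ordAt h (G x) := by
  obtain ⟨j, hj⟩ := ENat.ne_top_iff_exists.1 hJ
  obtain ⟨c, hc⟩ := ENat.ne_top_iff_exists.1 hx
  obtain ⟨h1, h2⟩ := ordAt_eq hj.symm
  have h3 := core hk hG h1 h2 c h hh (ordAt_eq hc.symm).2
  rw [← hj, ← hc]
  have h4 : ∀ m : ℕ, (m : ℕ∞) ≤ ordAt (h ∘ G) x → (m : ℕ∞) ≤ (((k + j) * c : ℕ) : ℕ∞) :=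
    fun m hm => Nat.cast_le.2 (h3 m (le_ordAt.1 hm))
  have := ENat.forall_natCast_le_iff_le.1 h4
  exact_mod_cast this

lemma iter_contDiff {g : (Fin k → ℂ) → (Fin k → ℂ)} (hg : ContDiff ℂ ω g) (n : ℕ) :
    ContDiff ℂ ω (g^[n]) := by
  induction n with
  | zero => exact contDiff_id
  | succ n ih => rw [Function.iterate_succ']; exact hg.comp ih

lemma exists_ne_of_ordAt {E : Type*} [NormedAddCommGroup E] [NormedSpace ℂ E] {f : E → ℂ} {x : E}
    (h : ∃ n, iteratedFDeriv ℂ n f x ≠ 0) : ∃ z, f z ≠ 0 := by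
  by_contra! hz
  obtain ⟨n, hn⟩ := h
  have : f = fun _ => 0 := funext hz
  apply hn
  rw [this]
  exact congrFun (iteratedFDeriv_fun_zero (𝕜 := ℂ) (E := E) (F := ℂ) (n := n)) x

lemma iter_jac {g : (Fin k → ℂ) → (Fin k → ℂ)} (hk : 1 ≤ k) (hg : ContDiff ℂ ω g)
    (hJ : ∃ z, (fderiv ℂ g z).det ≠ 0) (n : ℕ) : ∃ z, (fderiv ℂ (g^[n]) z).det ≠ 0 := by
  induction n with
  | zero => exact ⟨0, by simp [ContinuousLinearMap.det]⟩
  | succ n ih =>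
    have hG := iter_contDiff hg n
    have hJG := J_contDiff hG
    have hJg := J_contDiff hg
    have a1 := ordAt_ne_top hJG ih 0
    have a2 := ordAt_ne_top hJg hJ (g^[n] 0)
    have a3 := main_ineq hk hG a1 hJg a2
    have a4 : ordAt ((fun z => (fderiv ℂ g z).det) ∘ g^[n]) 0 ≠ ⊤ := by
      refine ne_top_of_le_ne_top ?_ a3
      exact WithTop.mul_ne_top (WithTop.add_ne_top.2 ⟨ENat.natCast_ne_top k, a1⟩) a2
    obtain ⟨a, ha⟩ := ENat.ne_top_iff_exists.1 a4
    obtain ⟨b, hb⟩ := ENat.ne_top_iff_exists.1 a1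
    obtain ⟨a5, a6⟩ := ordAt_eq ha.symm
    obtain ⟨b5, b6⟩ := ordAt_eq hb.symm
    obtain ⟨z, hz⟩ := exists_ne_of_ordAt ⟨_, mul_ne (hJg.comp hG) hJG a5 a6 b5 b6⟩
    refine ⟨z, ?_⟩
    rw [Function.iterate_succ', fderiv_comp z (hg.differentiable (by simp) _)
      (hG.differentiable (by simp) _)]
    simpa [ContinuousLinearMap.det, LinearMap.det_comp] using hz

end JCC

/-- Proposition 4.1 (i), smooth case `X = ℂ^k` with `C_X = 1`:
for `g : ℂ^k → ℂ^k` entire with Jacobian determinant not identically zero, the Jacobian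
determinants of all the iterates `g^[n]` (`n ≥ 1`) are not identically zero, all the
values `μ_n(x) = k + ord_x(det D(g^n))` are finite, and for every entire `h : ℂ^k → ℂ`
not identically zero, `ord_x(h ∘ g^n) ≤ μ_n(x) · ord_{g^n(x)}(h)`. -/
theorem jacobian_cocycle_comparison
    (k : ℕ) (hk : 1 ≤ k) (g : (Fin k → ℂ) → (Fin k → ℂ))
    (hg : ∀ z, AnalyticAt ℂ g z)
    (hJ : ∃ z, (fderiv ℂ g z).det ≠ 0) :
    (∀ n : ℕ, 1 ≤ n → ∃ z, (fderiv ℂ (g^[n]) z).det ≠ 0) ∧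
    (∀ n : ℕ, 1 ≤ n → ∀ x : Fin k → ℂ,
      ordAt (fun z => (fderiv ℂ (g^[n]) z).det) x ≠ ⊤) ∧
    (∀ h : (Fin k → ℂ) → ℂ, (∀ z, AnalyticAt ℂ h z) → (∃ z, h z ≠ 0) →
      ∀ n : ℕ, 1 ≤ n → ∀ x : Fin k → ℂ,
        ordAt (h ∘ g^[n]) x ≤
          ((k : ℕ∞) + ordAt (fun z => (fderiv ℂ (g^[n]) z).det) x)
            * ordAt h (g^[n] x)) := by
  have hgc : ContDiff ℂ ω g :=
    contDiff_iff_contDiffAt.2 fun z => (hg z).contDiffAt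
  have hA := JCC.iter_jac hk hgc hJ
  have hB : ∀ n : ℕ, ∀ x : Fin k → ℂ, ordAt (fun z => (fderiv ℂ (g^[n]) z).det) x ≠ ⊤ :=
    fun n x => JCC.ordAt_ne_top (JCC.J_contDiff (JCC.iter_contDiff hgc n)) (hA n) x
  refine ⟨fun n _ => hA n, fun n _ x => hB n x, ?_⟩
  intro h hh hne n _ x
  have hhc : ContDiff ℂ ω h :=
    contDiff_iff_contDiffAt.2 fun z => (hh z).contDiffAt
  exact JCC.main_ineq hk (JCC.iter_contDiff hgc n) (hB n x) hhc (JCC.ordAt_ne_top hhc hne _)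
end

section
/- Let k ≥ 1 and let g : ℂ^k → ℂ^k be complex-analytic on all of ℂ^k such that the Jacobian determinant z ↦ det(Dg(z)) is not identically zero. For n ≥ 1 and x ∈ ℂ^k set μ_n(x) := k + ord_x(det D(g^n)), where g^n is the n-fold iterate of g. Then for all integers n, m ≥ 1 and every x ∈ ℂ^k, μ_{n+m}(x) ≤ μ_n(x) · μ_m(g^n(x)). -/
/-- The Jacobian cocycle of an entire self-map `g` of `ℂ^k`:
`μ_n(x) := k + ord_x(det D(g^[n]))`, valued in `ℕ∞`. -/
noncomputable def jacCocycle (k : ℕ) (g : (Fin k → ℂ) → (Fin k → ℂ)) (n : ℕ)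
    (x : Fin k → ℂ) : ℕ∞ :=
  (k : ℕ∞) + ordAt (fun z => (fderiv ℂ (g^[n]) z).det) x

open scoped ContDiff

section aux

variable {E : Type*} [NormedAddCommGroup E] [NormedSpace ℂ E]

lemma aux_diag {f : E → ℂ} (hf : ContDiff ℂ ω f) (p : E) {n : ℕ}
    (h : iteratedFDeriv ℂ n f p ≠ 0) : ∃ v, iteratedFDeriv ℂ n f p (fun _ => v) ≠ 0 := by
  by_contra! hc
  apply h
  ext v
  have h1 := (iteratedFDeriv ℂ n f p).iteratedFDeriv_comp_diagonal 0 v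
  have h0 : (fun x : E => iteratedFDeriv ℂ n f p (fun _ => x)) = 0 := funext hc
  have h2 : ∀ σ : Equiv.Perm (Fin n), iteratedFDeriv ℂ n f p (fun i => v (σ i))
      = iteratedFDeriv ℂ n f p v := fun σ => hf.contDiffAt.iteratedFDeriv_comp_perm v σ
  rw [h0] at h1
  simp only [h2] at h1
  simp only [Finset.sum_const, Finset.card_univ, Fintype.card_perm, Fintype.card_fin] at h1
  have h3 : iteratedFDeriv ℂ n (0 : E → ℂ) 0 = 0 := by
    have := iteratedFDeriv_fun_zero (𝕜 := ℂ) (E := E) (F := ℂ) (n := n)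
    exact congrFun this 0
  rw [h3] at h1
  simpa [Nat.factorial_ne_zero] using h1.symm

lemma aux_diag2 {f h : E → ℂ} (hf : ContDiff ℂ ω f) (hh : ContDiff ℂ ω h) (p : E) {a b : ℕ}
    (h1 : iteratedFDeriv ℂ a f p ≠ 0) (h2 : iteratedFDeriv ℂ b h p ≠ 0) :
    ∃ v, iteratedFDeriv ℂ a f p (fun _ => v) ≠ 0 ∧ iteratedFDeriv ℂ b h p (fun _ => v) ≠ 0 := by
  obtain ⟨v, hv⟩ := aux_diag hf p h1
  obtain ⟨w, hw⟩ := aux_diag hh p h2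
  by_contra! hc
  have c1 : ContDiff ℂ ω (fun v : E => iteratedFDeriv ℂ a f p (fun _ => v)) :=
    (iteratedFDeriv ℂ a f p).contDiff.comp (contDiff_pi.2 fun _ => contDiff_id)
  have c2 : ContDiff ℂ ω (fun v : E => iteratedFDeriv ℂ b h p (fun _ => v)) :=
    (iteratedFDeriv ℂ b h p).contDiff.comp (contDiff_pi.2 fun _ => contDiff_id)
  have a2 := contDiff_omega_iff_analyticOnNhd.1 c2
  have ev : ∀ᶠ u in nhds v, iteratedFDeriv ℂ a f p (fun _ => u) ≠ 0 :=
    c1.continuous.continuousAt.eventually_ne hv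
  have ev2 : (fun u : E => iteratedFDeriv ℂ b h p (fun _ => u)) =ᶠ[nhds v] 0 := by
    filter_upwards [ev] with u hu using hc u hu
  have := a2.eqOn_zero_of_preconnected_of_eventuallyEq_zero isPreconnected_univ
    (Set.mem_univ v) ev2 (Set.mem_univ w)
  exact hw this

lemma aux_line {f : E → ℂ} (hf : ContDiff ℂ ω f) (p v : E) (n : ℕ) :
    iteratedDeriv n (fun t : ℂ => f (p + t • v)) 0 = iteratedFDeriv ℂ n f p (fun _ => v) := by
  have hF : ContDiff ℂ ω (fun z => f (p + z)) := hf.comp (contDiff_const.add contDiff_id)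
  have := (ContinuousLinearMap.toSpanSingleton ℂ v).iteratedFDeriv_comp_right hF (0 : ℂ)
    (i := n) le_top
  rw [iteratedDeriv_eq_iteratedFDeriv]
  have e : (fun t : ℂ => f (p + t • v)) =
      (fun z => f (p + z)) ∘ (ContinuousLinearMap.toSpanSingleton ℂ v) := by
    ext t; simp
  rw [e, this]
  simp [iteratedFDeriv_comp_add_left]

lemma aux_mul {f h : E → ℂ} (hf : ContDiff ℂ ω f) (hh : ContDiff ℂ ω h) (p : E) {a b : ℕ}
    (h1 : iteratedFDeriv ℂ a f p ≠ 0) (h2 : iteratedFDeriv ℂ b h p ≠ 0) :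
    ∃ n ≤ a + b, iteratedFDeriv ℂ n (fun z => f z * h z) p ≠ 0 := by
  obtain ⟨v, hv1, hv2⟩ := aux_diag2 hf hh p h1 h2
  have hl : ContDiff ℂ ω (fun t : ℂ => p + t • v) := by fun_prop
  have A1 : AnalyticAt ℂ (fun t : ℂ => f (p + t • v)) 0 :=
    contDiff_omega_iff_analyticOnNhd.1 (hf.comp hl) 0 (Set.mem_univ _)
  have A2 : AnalyticAt ℂ (fun t : ℂ => h (p + t • v)) 0 :=
    contDiff_omega_iff_analyticOnNhd.1 (hh.comp hl) 0 (Set.mem_univ _)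
  rw [← aux_line hf] at hv1
  rw [← aux_line hh] at hv2
  by_contra! hc
  have o1 : ¬ ((a + 1 : ℕ) : ℕ∞) ≤ analyticOrderAt (fun t : ℂ => f (p + t • v)) 0 := by
    rw [natCast_le_analyticOrderAt_iff_iteratedDeriv_eq_zero A1]
    exact fun H => hv1 (H a (by omega))
  have o2 : ¬ ((b + 1 : ℕ) : ℕ∞) ≤ analyticOrderAt (fun t : ℂ => h (p + t • v)) 0 := by
    rw [natCast_le_analyticOrderAt_iff_iteratedDeriv_eq_zero A2]
    exact fun H => hv2 (H b (by omega))
  have o3 : ((a + b + 1 : ℕ) : ℕ∞) ≤ analyticOrderAt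
      ((fun t : ℂ => f (p + t • v)) * (fun t : ℂ => h (p + t • v))) 0 := by
    rw [natCast_le_analyticOrderAt_iff_iteratedDeriv_eq_zero (A1.mul A2)]
    intro i hi
    have := aux_line (hf.mul hh) p v i
    rw [hc i (by omega)] at this
    exact this
  rw [analyticOrderAt_mul A1 A2] at o3
  generalize analyticOrderAt (fun t : ℂ => f (p + t • v)) 0 = x at *
  generalize analyticOrderAt (fun t : ℂ => h (p + t • v)) 0 = y at *
  induction x using ENat.recTopCoe with
  | top => simp at o1
  | coe x =>
    induction y using ENat.recTopCoe with
    | top => simp at o2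
    | coe y => norm_cast at o1 o2 o3; omega

end aux

lemma aux_det {k : ℕ} (L : (Fin k → ℂ) →L[ℂ] (Fin k → ℂ)) :
    L.det = (LinearMap.toMatrix' (L : (Fin k → ℂ) →ₗ[ℂ] (Fin k → ℂ))).det := by
  rw [LinearMap.det_toMatrix']

lemma aux_cd_entry {k : ℕ} {G : (Fin k → ℂ) → (Fin k → ℂ)} (hG : ContDiff ℂ ω G) (i j : Fin k) :
    ContDiff ℂ ω (fun z => LinearMap.toMatrix'
      (fderiv ℂ G z : (Fin k → ℂ) →ₗ[ℂ] (Fin k → ℂ)) i j) := by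
  have h1 : ContDiff ℂ ω (fderiv ℂ G) := hG.fderiv_right (by simp)
  simp only [LinearMap.toMatrix'_apply]
  have h2 : ContDiff ℂ ω (fun z => fderiv ℂ G z (Pi.single j 1)) :=
    h1.clm_apply contDiff_const
  exact (contDiff_pi.1 h2 i)

lemma aux_cd_mdet {k : ℕ} {M : (Fin k → ℂ) → Matrix (Fin k) (Fin k) ℂ}
    (hM : ∀ i j, ContDiff ℂ ω (fun z => M z i j)) : ContDiff ℂ ω (fun z => (M z).det) := by
  simp only [Matrix.det_apply]
  refine ContDiff.sum fun σ _ => ContDiff.const_smul _ (contDiff_prod fun i _ => hM _ _)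

lemma aux_cd_det {k : ℕ} {G : (Fin k → ℂ) → (Fin k → ℂ)} (hG : ContDiff ℂ ω G) :
    ContDiff ℂ ω (fun z => (fderiv ℂ G z).det) := by
  simp only [aux_det]
  exact aux_cd_mdet (aux_cd_entry hG)

/-- Smooth adjugate applied to a vector. -/
lemma aux_adj {k : ℕ} {G : (Fin k → ℂ) → (Fin k → ℂ)} (hG : ContDiff ℂ ω G) (w : Fin k → ℂ) :
    ∃ A : (Fin k → ℂ) → (Fin k → ℂ), ContDiff ℂ ω A ∧
      ∀ z, fderiv ℂ G z (A z) = (fderiv ℂ G z).det • w := by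
  refine ⟨fun z => (LinearMap.toMatrix'
      (fderiv ℂ G z : (Fin k → ℂ) →ₗ[ℂ] (Fin k → ℂ))).cramer w, ?_, ?_⟩
  · rw [contDiff_pi]
    intro i
    simp only [Matrix.cramer_apply]
    apply aux_cd_mdet
    intro a b
    simp only [Matrix.updateCol_apply]
    split_ifs
    · exact contDiff_const
    · exact aux_cd_entry hG _ _
  · intro z
    rw [aux_det, ← Matrix.mulVec_cramer, LinearMap.toMatrix'_mulVec]
    rfl

lemma aux_chain {k : ℕ} {G : (Fin k → ℂ) → (Fin k → ℂ)} (hG : ContDiff ℂ ω G)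
    (x : Fin k → ℂ) (a : ℕ) (ha : iteratedFDeriv ℂ a (fun z => (fderiv ℂ G z).det) x ≠ 0) (b : ℕ) :
    ∀ φ : (Fin k → ℂ) → ℂ, ContDiff ℂ ω φ → iteratedFDeriv ℂ b φ (G x) ≠ 0 →
      ∃ N ≤ (1 + a) * b, iteratedFDeriv ℂ N (fun z => φ (G z)) x ≠ 0 := by
  induction b with
  | zero =>
    intro φ hφ h
    refine ⟨0, by simp, fun h0 => h ?_⟩
    ext v
    have := congrArg (fun M => M v) h0
    simpa using this
  | succ b ih =>
    intro φ hφ h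
    have hφ' : ContDiff ℂ ω (fderiv ℂ φ) := hφ.fderiv_right (by simp)
    obtain ⟨w, hw⟩ : ∃ w, iteratedFDeriv ℂ b (fun z => fderiv ℂ φ z w) (G x) ≠ 0 := by
      by_contra! hc
      apply h
      ext v
      rw [iteratedFDeriv_succ_apply_right]
      have := hc (v (Fin.last b))
      have e := iteratedFDeriv_clm_apply_const_apply (𝕜 := ℂ) hφ' (i := b) le_top (x := G x)
        (u := v (Fin.last b)) (m := Fin.init v)
      rw [this] at e
      simpa using e.symm
    obtain ⟨N', hN', hne⟩ := ih _ (hφ'.clm_apply contDiff_const) hw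
    obtain ⟨M, hM, hMne⟩ := aux_mul (aux_cd_det hG)
      ((hφ'.clm_apply contDiff_const).comp hG) x ha hne
    obtain ⟨A, hA, hA'⟩ := aux_adj hG w
    have key : (fun z => (fderiv ℂ G z).det * ((fun z => fderiv ℂ φ z w) ∘ G) z)
        = fun z => (fderiv ℂ (fun z => φ (G z)) z) (A z) := by
      ext z
      have : fderiv ℂ (fun z => φ (G z)) z = (fderiv ℂ φ (G z)).comp (fderiv ℂ G z) :=
        fderiv_comp z (hφ.differentiable (by simp)).differentiableAt
          (hG.differentiable (by simp)).differentiableAt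
      rw [this]
      simp [hA']
    rw [key] at hMne
    by_contra! hc
    apply hMne
    have hc1 : ContDiff ℂ ω (fderiv ℂ (fun z => φ (G z))) :=
      (hφ.comp hG).fderiv_right (by simp)
    have hb := norm_iteratedFDeriv_clm_apply hc1 hA x (n := M) le_top
    rw [Finset.sum_eq_zero] at hb
    · exact norm_le_zero_iff.1 hb
    · intro i hi
      rw [norm_iteratedFDeriv_fderiv, hc (i + 1)]
      · simp
      · have := Finset.mem_range.1 hi
        nlinarith

lemma aux_ord_le {E F : Type*} [NormedAddCommGroup E] [NormedSpace ℂ E]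
    [NormedAddCommGroup F] [NormedSpace ℂ F] {f : E → F} {p : E} {n : ℕ}
    (h : iteratedFDeriv ℂ n f p ≠ 0) : ordAt f p ≤ n := sInf_le ⟨n, h, rfl⟩

lemma aux_ord_cases {E F : Type*} [NormedAddCommGroup E] [NormedSpace ℂ E]
    [NormedAddCommGroup F] [NormedSpace ℂ F] (f : E → F) (p : E) :
    ordAt f p = ⊤ ∨ ∃ n : ℕ, ordAt f p = n ∧ iteratedFDeriv ℂ n f p ≠ 0 := by
  by_cases hne : ((fun n : ℕ => (n : ℕ∞)) '' {n : ℕ | iteratedFDeriv ℂ n f p ≠ 0}).Nonempty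
  · right
    obtain ⟨n, hn, he⟩ := csInf_mem hne
    exact ⟨n, he.symm, hn⟩
  · left
    rw [Set.not_nonempty_iff_eq_empty] at hne
    rw [ordAt, hne, sInf_empty]

/-- Proposition 4.1 (ii), smooth case `X = ℂ^k` with `C_X = 1`:
submultiplicativity of the Jacobian cocycle: for `g : ℂ^k → ℂ^k` entire with Jacobian
determinant not identically zero, `μ_{n+m}(x) ≤ μ_n(x) · μ_m(g^n(x))` for all
`n, m ≥ 1` and all `x`. -/
theorem jacobian_cocycle_submultiplicative
    (k : ℕ) (hk : 1 ≤ k) (g : (Fin k → ℂ) → (Fin k → ℂ))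
    (hg : ∀ z, AnalyticAt ℂ g z)
    (hJ : ∃ z, (fderiv ℂ g z).det ≠ 0)
    (n m : ℕ) (hn : 1 ≤ n) (hm : 1 ≤ m) (x : Fin k → ℂ) :
    jacCocycle k g (n + m) x ≤ jacCocycle k g n x * jacCocycle k g m (g^[n] x) := by

  have hg' : ContDiff ℂ ω g := contDiff_omega_iff_analyticOnNhd.2 fun z _ => hg z
  have hgi : ∀ i, ContDiff ℂ ω (g^[i]) := by
    intro i
    induction i with
    | zero => exact contDiff_id
    | succ i ih => rw [Function.iterate_succ]; exact ih.comp hg'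
  unfold jacCocycle
  have hk0 : (k : ℕ∞) ≠ 0 := by exact_mod_cast (by omega : k ≠ 0)
  rcases aux_ord_cases (fun z => (fderiv ℂ (g^[n]) z).det) x with h1 | ⟨a, ha, hane⟩
  · rw [h1, add_top, ENat.top_mul (by simp [hk0])]
    exact le_top
  rcases aux_ord_cases (fun z => (fderiv ℂ (g^[m]) z).det) (g^[n] x) with h2 | ⟨b, hb, hbne⟩
  · rw [h2, add_top, ENat.mul_top (by simp [hk0])]
    exact le_top
  obtain ⟨N, hN, hNne⟩ := aux_chain (hgi n) x a hane b _ (aux_cd_det (hgi m)) hbne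
  obtain ⟨M, hM, hMne⟩ := aux_mul ((aux_cd_det (hgi m)).comp (hgi n)) (aux_cd_det (hgi n)) x
    hNne hane
  have e : (fun z => (fderiv ℂ (g^[n + m]) z).det) = fun z =>
      ((fun z => (fderiv ℂ (g^[m]) z).det) ∘ g^[n]) z * (fderiv ℂ (g^[n]) z).det := by
    ext z
    have : fderiv ℂ (g^[n + m]) z = (fderiv ℂ (g^[m]) (g^[n] z)).comp (fderiv ℂ (g^[n]) z) := by
      rw [Nat.add_comm, Function.iterate_add]
      exact fderiv_comp z ((hgi m).differentiable (by simp)).differentiableAt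
          ((hgi n).differentiable (by simp)).differentiableAt
    rw [this]
    simp only [ContinuousLinearMap.det, ContinuousLinearMap.toLinearMap_comp, LinearMap.det_comp,
      Function.comp]
  rw [ha, hb, e]
  refine (add_le_add_right (aux_ord_le hMne) (k : ℕ∞)).trans ?_
  norm_cast
  obtain ⟨k, rfl⟩ : ∃ j, k = j + 1 := ⟨k - 1, by omega⟩
  nlinarith [Nat.zero_le (k * b), Nat.zero_le (k * a), Nat.zero_le (k * k)]
end

section
/- Let d ≥ 2 be a real number, p ≥ 1 an integer, δ > 0, θ > 0, β ≥ 0 real numbers, and M ∈ ℕ. Let (ν_r)_{r=0}^{M} and (d'_r)_{r=0}^{M} be real numbers such that for all 0 ≤ r ≤ M: ν_r ≥ δ·d^{-r}, d'_r ≥ 0, and d'_0 + d'_1 + ⋯ + d'_r ≥ θ·d^{rp}. Assume moreover β·d^{M} ≤ δ/2. Then Σ_{r=0}^{M} (ν_r − β)^p · d'_r ≥ (θ/2)·(δ/2)^p·(M+1). -/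
theorem abel_aux (D : ℝ) (hD : 2 ≤ D) (θ : ℝ) (hθ : 0 < θ) (a : ℕ → ℝ) (M : ℕ)
    (hsum : ∀ r ≤ M, θ * D ^ r ≤ ∑ i ∈ Finset.range (r + 1), a i) :
    ∀ m ≤ M, θ / 2 * m + (∑ i ∈ Finset.range (m + 1), a i) / D ^ m ≤
      ∑ i ∈ Finset.range (m + 1), a i / D ^ i := by
  intro m
  induction m with
  | zero => intro _; simp
  | succ m ih =>
    intro hm
    have h1 := ih (by omega)
    have h2 := hsum m (by omega)
    rw [Finset.sum_range_succ _ (m + 1), Finset.sum_range_succ _ (m + 1)]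
    set S := ∑ i ∈ Finset.range (m + 1), a i
    have hDp : 0 < D := by linarith
    have h3 : θ ≤ S / D ^ m := by rw [le_div_iff₀ (by positivity)]; exact h2
    have h4 : S / D ^ (m + 1) ≤ S / D ^ m / 2 := by
      rw [pow_succ, ← div_div]
      exact div_le_div_of_nonneg_left (by linarith) (by norm_num) hD
    rw [add_div]
    push_cast
    linarith

/-- key counting inequality in the proof of Theorem 4.2: if
`ν_r ≥ δ/d^r`, `d'_r ≥ 0`, `d'_0 + ⋯ + d'_r ≥ θ·d^{rp}` for `0 ≤ r ≤ M`, and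
`β·d^M ≤ δ/2`, then `Σ_{r=0}^M (ν_r − β)^p·d'_r ≥ (θ/2)·(δ/2)^p·(M+1)`. -/
theorem counting_inequality
    (d : ℝ) (hd : 2 ≤ d) (p : ℕ) (hp : 1 ≤ p)
    (δ θ β : ℝ) (hδ : 0 < δ) (hθ : 0 < θ) (hβ : 0 ≤ β) (M : ℕ)
    (ν d' : ℕ → ℝ)
    (hν : ∀ r ≤ M, δ / d ^ r ≤ ν r)
    (hd' : ∀ r ≤ M, 0 ≤ d' r)
    (hsum : ∀ r ≤ M, θ * d ^ (r * p) ≤ ∑ i ∈ Finset.range (r + 1), d' i)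
    (hβM : β * d ^ M ≤ δ / 2) :
    (θ / 2) * (δ / 2) ^ p * (M + 1) ≤
      ∑ r ∈ Finset.range (M + 1), (ν r - β) ^ p * d' r := by
  have hd0 : 0 < d := by linarith
  have hD : 2 ≤ d ^ p := hd.trans (le_self_pow₀ (by linarith) (by omega))
  have hs : ∀ r ≤ M, θ * (d ^ p) ^ r ≤ ∑ i ∈ Finset.range (r + 1), d' i := by
    intro r hr
    rw [← pow_mul, mul_comm p r]
    exact hsum r hr
  have h1 := abel_aux (d ^ p) hD θ hθ d' M hs M le_rfl
  have h2 : θ ≤ (∑ i ∈ Finset.range (M + 1), d' i) / (d ^ p) ^ M := by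
    rw [le_div_iff₀ (by positivity)]
    exact hs M le_rfl
  have h3 : θ / 2 * (M + 1) ≤ ∑ i ∈ Finset.range (M + 1), d' i / (d ^ p) ^ i := by
    linarith
  calc (θ / 2) * (δ / 2) ^ p * (M + 1) = (δ / 2) ^ p * (θ / 2 * (M + 1)) := by ring
    _ ≤ (δ / 2) ^ p * ∑ i ∈ Finset.range (M + 1), d' i / (d ^ p) ^ i := by gcongr
    _ = ∑ i ∈ Finset.range (M + 1), (δ / 2 / d ^ i) ^ p * d' i := by
      rw [Finset.mul_sum]
      refine Finset.sum_congr rfl fun i _ => ?_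
      rw [div_pow (δ / 2), ← pow_mul, ← pow_mul, mul_comm p i]
      ring
    _ ≤ _ := by
      refine Finset.sum_le_sum fun i hi => ?_
      have hi' : i ≤ M := by
        have := Finset.mem_range.mp hi
        omega
      refine mul_le_mul_of_nonneg_right ?_ (hd' i hi')
      refine pow_le_pow_left₀ (by positivity) ?_ p
      have h5 : β ≤ δ / 2 / d ^ i := by
        rw [le_div_iff₀ (by positivity)]
        refine le_trans ?_ hβM
        exact mul_le_mul_of_nonneg_left (pow_le_pow_right₀ (by linarith) hi') hβ
      have h6 := hν i hi'
      have h7 : δ / d ^ i = δ / 2 / d ^ i + δ / 2 / d ^ i := by ring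
      linarith
end

section
/- Let V be a finite-dimensional real normed vector space and C ⊆ V a nonempty open convex cone (x, y ∈ C and t > 0 imply x + y ∈ C and t·x ∈ C) whose closure is salient: closure(C) ∩ (−closure(C)) = {0}. Let T : V → V be a linear map with T(C) ⊆ C, and suppose there are v ∈ C and a real number δ > 0 with T(v) = δ·v. Then there exists a constant A > 0 such that ‖T^n(w)‖ ≤ A·δ^n·‖w‖ for every n ∈ ℕ and every w ∈ V. -/
/-- Perron–Frobenius-type bound from Section 4.2: let `V` be a
finite-dimensional real normed vector space, `C ⊆ V` a nonempty open convex cone whose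
closure is salient, and `T : V → V` linear with `T(C) ⊆ C` and an eigenvector `v ∈ C`
with eigenvalue `δ > 0`.  Then there is `A > 0` with `‖T^n w‖ ≤ A·δ^n·‖w‖` for all `n`
and all `w`. -/
theorem linear_growth_of_invariant_cone
    {V : Type*} [NormedAddCommGroup V] [NormedSpace ℝ V] [FiniteDimensional ℝ V]
    (C : Set V) (hne : C.Nonempty) (hopen : IsOpen C)
    (hadd : ∀ x ∈ C, ∀ y ∈ C, x + y ∈ C)
    (hsmul : ∀ x ∈ C, ∀ t : ℝ, 0 < t → t • x ∈ C)
    (hsal : closure C ∩ (-(closure C)) = {0})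
    (T : V →ₗ[ℝ] V) (hTC : T '' C ⊆ C)
    (v : V) (hv : v ∈ C) (δ : ℝ) (hδ : 0 < δ) (hTv : T v = δ • v) :
    ∃ A : ℝ, 0 < A ∧ ∀ n : ℕ, ∀ w : V, ‖(T ^ n) w‖ ≤ A * δ ^ n * ‖w‖ := by
  obtain ⟨m, hm0, hm⟩ := (isCompact_sphere (0 : V) 1).exists_forall_le'
    (f := fun u => Metric.infDist u C + Metric.infDist (-u) C)
    (((Metric.continuous_infDist_pt C).add
      ((Metric.continuous_infDist_pt C).comp continuous_neg)).continuousOn) (a := 0) (by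
      intro u hu
      have h1 : 0 ≤ Metric.infDist u C := Metric.infDist_nonneg
      have h2 : 0 ≤ Metric.infDist (-u) C := Metric.infDist_nonneg
      by_contra hcon
      have hc : Metric.infDist u C + Metric.infDist (-u) C ≤ 0 := not_lt.mp hcon
      have h3 : u ∈ closure C := (Metric.mem_closure_iff_infDist_zero hne).2 (by linarith)
      have h4 : -u ∈ closure C := (Metric.mem_closure_iff_infDist_zero hne).2 (by linarith)
      have h5 : u ∈ closure C ∩ (-(closure C)) := ⟨h3, h4⟩
      rw [hsal] at h5
      have h6 : u = 0 := h5
      simp [h6] at hu)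
  have key : ∀ (s : ℝ) (z : V), 0 < s → s • v + z ∈ C → s • v - z ∈ C →
      ‖z‖ ≤ s * (2 * ‖v‖ / m) := by
    intro s z hs hp hq
    by_cases hz : z = 0
    · subst hz
      simp only [norm_zero]
      positivity
    have hr : 0 < ‖z‖ := norm_pos_iff.2 hz
    have hu := hm (‖z‖⁻¹ • z) (by simp [norm_smul, hr.ne'])
    have hp' := hsmul _ hp ‖z‖⁻¹ (inv_pos.2 hr)
    have hq' := hsmul _ hq ‖z‖⁻¹ (inv_pos.2 hr)
    have d1 : Metric.infDist (‖z‖⁻¹ • z) C ≤ ‖z‖⁻¹ * (s * ‖v‖) := by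
      refine (Metric.infDist_le_dist_of_mem hp').trans_eq ?_
      rw [dist_eq_norm, ← smul_sub, sub_add_cancel_right, norm_smul, norm_neg, norm_smul,
        norm_inv, norm_norm, Real.norm_of_nonneg hs.le]
    have d2 : Metric.infDist (-(‖z‖⁻¹ • z)) C ≤ ‖z‖⁻¹ * (s * ‖v‖) := by
      refine (Metric.infDist_le_dist_of_mem hq').trans_eq ?_
      have : -(‖z‖⁻¹ • z) - ‖z‖⁻¹ • (s • v - z) = -(‖z‖⁻¹ • (s • v)) := by
        rw [smul_sub]; abel
      rw [dist_eq_norm, this, norm_neg, norm_smul, norm_smul,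
        norm_inv, norm_norm, Real.norm_of_nonneg hs.le]
    have h : m ≤ 2 * (‖z‖⁻¹ * (s * ‖v‖)) := by linarith
    have h' : m * ‖z‖ ≤ 2 * (s * ‖v‖) := by
      calc m * ‖z‖ ≤ 2 * (‖z‖⁻¹ * (s * ‖v‖)) * ‖z‖ := by gcongr
        _ = 2 * (s * ‖v‖) := by field_simp
    rw [← mul_div_assoc, le_div_iff₀ hm0]
    linarith
  obtain ⟨ε, hε, hball⟩ := Metric.isOpen_iff.1 hopen v hv
  have hTn : ∀ n : ℕ, ∀ x ∈ C, (T ^ n) x ∈ C := by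
    intro n
    induction n with
    | zero => intro x hx; simpa using hx
    | succ k ih =>
      intro x hx
      rw [pow_succ, Module.End.mul_apply]
      exact ih _ (hTC ⟨x, hx, rfl⟩)
  have hTnv : ∀ n : ℕ, (T ^ n) v = δ ^ n • v := by
    intro n
    induction n with
    | zero => simp
    | succ k ih =>
      rw [pow_succ, Module.End.mul_apply, hTv, map_smul, ih, smul_smul, pow_succ, mul_comm]
  refine ⟨2 / ε * (2 * ‖v‖ / m) + 1, by positivity, ?_⟩
  intro n w
  by_cases hw : w = 0
  · simp [hw]
  have hr : 0 < ‖w‖ := norm_pos_iff.2 hw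
  have ht : 0 < 2 * ‖w‖ / ε := by positivity
  set t := 2 * ‖w‖ / ε with htdef
  have hlt : ‖t⁻¹ • w‖ < ε := by
    rw [norm_smul, norm_inv, Real.norm_of_nonneg ht.le, htdef]
    have : (2 * ‖w‖ / ε)⁻¹ * ‖w‖ = ε / 2 := by field_simp
    rw [this]; linarith
  have hp : t • v + w ∈ C := by
    have := hsmul (v + t⁻¹ • w) (hball (by simpa [dist_eq_norm] using hlt)) t ht
    rwa [smul_add, smul_inv_smul₀ ht.ne'] at this
  have hq : t • v - w ∈ C := by
    have := hsmul (v - t⁻¹ • w) (hball (by simpa [dist_eq_norm] using hlt)) t ht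
    rwa [smul_sub, smul_inv_smul₀ ht.ne'] at this
  have hp' := hTn n _ hp
  have hq' := hTn n _ hq
  rw [map_add, map_smul, hTnv, smul_smul] at hp'
  rw [map_sub, map_smul, hTnv, smul_smul] at hq'
  have hfin := key (t * δ ^ n) _ (by positivity) hp' hq'
  refine hfin.trans ?_
  have e : t * δ ^ n * (2 * ‖v‖ / m) = 2 / ε * (2 * ‖v‖ / m) * δ ^ n * ‖w‖ := by
    rw [htdef]; ring
  rw [e]
  gcongr
  linarith
end

section
/- Let k ≥ 1 and N ≥ 1 be integers, let U ⊆ ℂ^k be open, let f_1, …, f_N be complex-analytic functions on U, and let x_1, …, x_r ∈ U be finitely many points such that for each j, min_{1≤i≤N} ord_{x_j}(f_i) < ∞. Then there exists θ = (θ_1,…,θ_N) ∈ ℂ^N such that for every j = 1, …, r: ord_{x_j}(θ_1 f_1 + ⋯ + θ_N f_N) = min_{1≤i≤N} ord_{x_j}(f_i). -/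
theorem aux_iter {k N : ℕ} (f : Fin N → (Fin k → ℂ) → ℂ) (p : Fin k → ℂ)
    (hf : ∀ i, AnalyticAt ℂ (f i) p) (θ : Fin N → ℂ) (n : ℕ) :
    iteratedFDeriv ℂ n (fun z => ∑ i, θ i * f i z) p
      = ∑ i, θ i • iteratedFDeriv ℂ n (f i) p := by
  have h1 : ∀ i, ContDiffAt ℂ n (f i) p := fun i => (hf i).contDiffAt
  have h2 : ∀ i ∈ (Finset.univ : Finset (Fin N)), ContDiffAt ℂ n (fun z => θ i * f i z) p :=
    fun i _ => contDiffAt_const.mul (h1 i)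
  rw [iteratedFDeriv_fun_sum_apply h2]
  refine Finset.sum_congr rfl fun i _ => ?_
  have h3 := iteratedFDeriv_const_smul_apply' (a := θ i) (h1 i)
  simpa only [smul_eq_mul] using h3

theorem ordAt_le {k : ℕ} (f : (Fin k → ℂ) → ℂ) (p : Fin k → ℂ) (n : ℕ)
    (h : iteratedFDeriv ℂ n f p ≠ 0) : ordAt f p ≤ n :=
  sInf_le ⟨n, h, rfl⟩

theorem ordAt_attained {k : ℕ} (f : (Fin k → ℂ) → ℂ) (p : Fin k → ℂ)
    (h : ordAt f p ≠ ⊤) : ∃ n : ℕ, iteratedFDeriv ℂ n f p ≠ 0 ∧ (n : ℕ∞) = ordAt f p := by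
  have hne : ((fun n : ℕ => (n : ℕ∞)) '' {n : ℕ | iteratedFDeriv ℂ n f p ≠ 0}).Nonempty := by
    by_contra hc
    rw [Set.not_nonempty_iff_eq_empty] at hc
    apply h
    rw [ordAt, hc, sInf_empty]
  obtain ⟨n, hn, hn'⟩ := csInf_mem hne
  exact ⟨n, hn, hn'⟩

/-- core of Lemma 5.5: given analytic `f_1, …, f_N` on an open
`U ⊆ ℂ^k` and finitely many points `x_1, …, x_r ∈ U` at each of which
`min_i ord_{x_j}(f_i) < ∞`, there is a single `θ ∈ ℂ^N` such that
`ord_{x_j}(Σ θ_i f_i) = min_i ord_{x_j}(f_i)` simultaneously for all `j`. -/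
theorem simultaneous_generic_linear_combination
    (k N : ℕ) (hk : 1 ≤ k) (hN : 1 ≤ N)
    (U : Set (Fin k → ℂ)) (hU : IsOpen U)
    (f : Fin N → (Fin k → ℂ) → ℂ) (hf : ∀ i, ∀ z ∈ U, AnalyticAt ℂ (f i) z)
    (r : ℕ) (x : Fin r → (Fin k → ℂ)) (hx : ∀ j, x j ∈ U)
    (hfin : ∀ j, (⨅ i, ordAt (f i) (x j)) ≠ ⊤) :
    ∃ θ : Fin N → ℂ, ∀ j : Fin r,
      ordAt (fun z => ∑ i, θ i * f i z) (x j) = ⨅ i, ordAt (f i) (x j) := by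
  have hne : Nonempty (Fin N) := ⟨⟨0, hN⟩⟩
  have key : ∀ j, ∃ n : ℕ, ∃ i, iteratedFDeriv ℂ n (f i) (x j) ≠ 0 ∧
      (n : ℕ∞) = ⨅ i, ordAt (f i) (x j) := by
    intro j
    obtain ⟨i, hi⟩ := exists_eq_ciInf_of_finite (f := fun i => ordAt (f i) (x j))
    obtain ⟨n, hn, hn'⟩ := ordAt_attained (f i) (x j) (by
      have := hfin j
      rw [← hi] at this
      exact this)
    exact ⟨n, i, hn, hn'.trans hi⟩
  choose n i hn hmin using key
  let L := fun j => Fintype.linearCombination ℂ (fun i => iteratedFDeriv ℂ (n j) (f i) (x j))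
  have hθ : ∃ θ : Fin N → ℂ, ∀ j, L j θ ≠ 0 := by
    by_contra! hc
    obtain ⟨j, hj⟩ := Subspace.exists_eq_top_of_iUnion_eq_univ
      (p := fun j => LinearMap.ker (L j)) (by
        ext θ
        simpa using hc θ)
    have : Pi.single (i j) (1 : ℂ) ∈ LinearMap.ker (L j) := by rw [hj]; trivial
    apply hn j
    simpa [L, Fintype.linearCombination_apply_single] using this
  obtain ⟨θ, hθ⟩ := hθ
  refine ⟨θ, fun j => ?_⟩
  have hD := aux_iter f (x j) (fun i => hf i _ (hx j)) θ
  apply le_antisymm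
  · rw [← hmin j]
    apply ordAt_le
    rw [hD]
    simpa [L, Fintype.linearCombination_apply] using hθ j
  · apply le_sInf
    rintro _ ⟨m, hm, rfl⟩
    by_contra hlt
    apply hm
    rw [hD]
    refine Finset.sum_eq_zero fun l _ => ?_
    by_cases h0 : iteratedFDeriv ℂ m (f l) (x j) = 0
    · rw [h0, smul_zero]
    · exact absurd ((iInf_le _ l).trans (ordAt_le (f l) (x j) m h0)) hlt
end

section
/- Fix integers k ≥ 0 and d ≥ 1, and let F : ℂ^{k+1} → ℂ^{k+1} be a map each of whose components is a homogeneous polynomial of degree d in k+1 variables, such that the only common zero of the components is 0. Then for every x ∈ ℂ^{k+1} and every complex-analytic function φ defined on a neighborhood of F(x) with ord_{F(x)}(φ) < ∞, one has ord_x(φ ∘ F) ≤ (k+1)·d·ord_{F(x)}(φ). -/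
section Aux
open MvPolynomial

attribute [local instance] MvPolynomial.gradedAlgebra in
lemma aux_comp {N d : ℕ} (P a : Fin N → MvPolynomial (Fin N) ℂ)
    (hhom : ∀ i, (P i).IsHomogeneous d) {n : ℕ} (hn : d ≤ n) {f : MvPolynomial (Fin N) ℂ}
    (hf : f.IsHomogeneous n) (h : ∑ i, a i * P i = f) :
    ∑ i, homogeneousComponent (n - d) (a i) * P i = f := by
  have key : ∀ i, homogeneousComponent n (a i * P i)
      = homogeneousComponent (n - d) (a i) * P i := by
    intro i
    have := DirectSum.coe_decompose_mul_of_right_mem_of_le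
      (homogeneousSubmodule (Fin N) ℂ) (a := a i) (b := P i) (n := n) (i := d) (hhom i) hn
    rw [← decomposition.decompose'_apply, ← decomposition.decompose'_apply]
    exact this
  have h2 : homogeneousComponent n f = f := homogeneousComponent_eq_self hf
  rw [← h2, ← h, map_sum]
  exact (Finset.sum_congr rfl fun i _ => key i).symm

lemma aux_finite {N d : ℕ} (hd : 1 ≤ d) (P : Fin N → MvPolynomial (Fin N) ℂ)
    (hhom : ∀ i, (P i).IsHomogeneous d)
    (hzero : ∀ x : Fin N → ℂ, (∀ i, MvPolynomial.eval x (P i) = 0) → x = 0) :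
    Module.Finite (Algebra.adjoin ℂ (Set.range P)) (MvPolynomial (Fin N) ℂ) := by
  set S := Algebra.adjoin ℂ (Set.range P) with hS
  set I := Ideal.span (Set.range P) with hI
  have hX : idealOfVars (Fin N) ℂ ≤ I.radical := by
    rw [idealOfVars, Ideal.span_le]
    rintro _ ⟨j, rfl⟩
    rw [← vanishingIdeal_zeroLocus_eq_radical (K := ℂ)]
    intro x hx
    have : x = 0 := hzero x fun i => by
      have := hx (P i) (Ideal.subset_span ⟨i, rfl⟩)
      simpa [aeval_eq_eval] using this
    simp [this]
  obtain ⟨B, hB⟩ := Ideal.exists_pow_le_of_le_radical_of_fg hX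
    (Submodule.fg_span (Set.finite_range _))
  have hW : (⨆ n ∈ Finset.range (B + d), homogeneousSubmodule (Fin N) ℂ n).FG :=
    Submodule.fg_biSup _ _ fun n _ => homogeneousSubmodule_fg _ _ n
  obtain ⟨t, ht⟩ := hW
  refine ⟨⟨t, ?_⟩⟩
  have hlow : ∀ n < B + d, ∀ f : MvPolynomial (Fin N) ℂ, f.IsHomogeneous n →
      f ∈ Submodule.span S (t : Set (MvPolynomial (Fin N) ℂ)) := by
    intro n hn f hf
    have h1 : f ∈ Submodule.span ℂ (t : Set (MvPolynomial (Fin N) ℂ)) := by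
      rw [ht]
      exact Submodule.mem_iSup_of_mem n (Submodule.mem_iSup_of_mem (Finset.mem_range.2 hn) hf)
    exact Submodule.span_le_restrictScalars ℂ S _ h1
  have hall : ∀ n, ∀ f : MvPolynomial (Fin N) ℂ, f.IsHomogeneous n →
      f ∈ Submodule.span S (t : Set (MvPolynomial (Fin N) ℂ)) := by
    intro n
    induction n using Nat.strong_induction_on with
    | _ n ih =>
      intro f hf
      by_cases hn : n < B + d
      · exact hlow n hn f hf
      · have hfI : f ∈ I := by
          apply hB
          rw [mem_pow_idealOfVars_iff]
          intro s hs
          have := hf.degree_eq_sum_deg_support hs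
          rw [Finsupp.degree_apply]
          omega
        obtain ⟨a, ha⟩ := Ideal.mem_span_range_iff_exists_fun.1 hfI
        rw [← aux_comp P a hhom (by omega) hf ha]
        refine Submodule.sum_mem _ fun i _ => ?_
        have h2 := ih (n - d) (by omega) _ (homogeneousComponent_isHomogeneous (n - d) (a i))
        have h3 := Submodule.smul_mem _ (⟨P i, Algebra.subset_adjoin ⟨i, rfl⟩⟩ : S) h2
        rw [mul_comm]
        exact h3
  rw [eq_top_iff]
  intro f _
  rw [← sum_homogeneousComponent f]
  exact Submodule.sum_mem _ fun n _ => hall n _ (homogeneousComponent_isHomogeneous n f)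

lemma aux_jac {N d : ℕ} (hd : 1 ≤ d) (P : Fin N → MvPolynomial (Fin N) ℂ)
    (hhom : ∀ i, (P i).IsHomogeneous d)
    (hzero : ∀ x : Fin N → ℂ, (∀ i, MvPolynomial.eval x (P i) = 0) → x = 0) :
    (Matrix.of fun i j => pderiv j (P i)).det ≠ 0 := by
  intro hdet
  obtain ⟨v, hv, hPv⟩ := Matrix.exists_mulVec_eq_zero_iff.2 hdet
  let D : Derivation ℂ (MvPolynomial (Fin N) ℂ) (MvPolynomial (Fin N) ℂ) := ∑ j, v j • pderiv j
  have hDa : ∀ f, D f = ∑ j, v j * pderiv j f := by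
    intro f
    have h1 : (D : MvPolynomial (Fin N) ℂ → MvPolynomial (Fin N) ℂ) = ∑ j, ⇑(v j • pderiv j) :=
      map_sum (Derivation.coeFnAddMonoidHom :
        Derivation ℂ (MvPolynomial (Fin N) ℂ) (MvPolynomial (Fin N) ℂ) →+ _) _ _
    rw [h1, Finset.sum_apply]
    rfl
  have hDP : ∀ i, D (P i) = 0 := by
    intro i
    have := congrFun hPv i
    simp only [Matrix.mulVec, dotProduct, Matrix.of_apply, Pi.zero_apply] at this
    rw [hDa, ← this]
    exact Finset.sum_congr rfl fun j _ => mul_comm _ _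
  set S := Algebra.adjoin ℂ (Set.range P) with hS
  have hDS : ∀ s ∈ S, D s = 0 := by
    intro s hs
    exact Derivation.eqOn_adjoin (D1 := D) (D2 := 0) (s := Set.range P)
      (by rintro _ ⟨i, rfl⟩; simpa using hDP i) hs
  have hfin := aux_finite hd P hhom hzero
  have hint : Algebra.IsIntegral S (MvPolynomial (Fin N) ℂ) := Algebra.IsIntegral.of_finite _ _
  let D' : Derivation S (MvPolynomial (Fin N) ℂ) (MvPolynomial (Fin N) ℂ) :=
    Derivation.mk' 
      { toFun := D
        map_add' := map_add D
        map_smul' := by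
          intro s f
          rw [Algebra.smul_def, Derivation.leibniz]
          have : D (algebraMap S _ s) = 0 := hDS _ s.2
          rw [this]
          simp [Algebra.smul_def] }
      (by intro a b; exact D.leibniz a b)
  apply hv
  funext j
  have hDX : D (X j) = v j := by
    rw [hDa, Finset.sum_eq_single j]
    · simp
    · intro b _ hb
      rw [pderiv_X_of_ne hb.symm, mul_zero]
    · simp
  rw [← hDX]
  by_contra hne
  have hmin : ∀ n, ∀ q : Polynomial S, q.natDegree = n → Polynomial.aeval (X j : MvPolynomial (Fin N) ℂ) q = 0 → q = 0 := by
    intro n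
    induction n using Nat.strong_induction_on with
    | _ n ih =>
      intro q hq h0
      have h1 := D'.map_aeval q (X j)
      rw [h0, map_zero] at h1
      have h2 : Polynomial.aeval (X j : MvPolynomial (Fin N) ℂ) (Polynomial.derivative q) = 0 := by
        rcases smul_eq_zero.1 h1.symm with h | h
        · exact h
        · exact absurd h hne
      by_cases hq0 : q.natDegree = 0
      · rw [Polynomial.eq_C_of_natDegree_eq_zero hq0] at h0 ⊢
        rw [Polynomial.aeval_C] at h0
        have : q.coeff 0 = 0 := Subtype.ext h0
        rw [this, map_zero]
      · have h3 := ih _ (by rw [← hq]; exact Polynomial.natDegree_derivative_lt hq0) _ rfl h2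
        exact absurd (Polynomial.derivative_eq_zero.1 h3) hq0
  obtain ⟨q, hq, hq0⟩ := hint.isIntegral (X j : MvPolynomial (Fin N) ℂ)
  exact hq.ne_zero (hmin _ q rfl hq0)

lemma aux_line_an {E : Type*} [NormedAddCommGroup E] [NormedSpace ℂ E] {f : E → ℂ} {p : E}
    (hf : AnalyticAt ℂ f p) (v : E) : AnalyticAt ℂ (fun t : ℂ => f (p + t • v)) 0 := by
  have hf' : AnalyticAt ℂ f ((fun t : ℂ => p + t • v) 0) := by simpa using hf
  exact hf'.comp (f := fun t : ℂ => p + t • v) (by fun_prop)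

lemma aux_line_deriv {E : Type*} [NormedAddCommGroup E] [NormedSpace ℂ E] {f : E → ℂ} {p : E}
    {q : FormalMultilinearSeries ℂ E ℂ}
    (hf : HasFPowerSeriesAt f q p) (v : E) (i : ℕ) :
    iteratedDeriv i (fun t : ℂ => f (p + t • v)) 0 = i.factorial • q i (fun _ => v) := by
  have h1 := hf.comp_sub (-p)
  rw [add_neg_cancel] at h1
  let u : ℂ →L[ℂ] E := ContinuousLinearMap.toSpanSingleton ℂ v
  have h2 : HasFPowerSeriesAt (fun z => f (z - -p)) q (u 0) := by simpa using h1
  obtain ⟨r, hr⟩ := h2.compContinuousLinearMap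
  have h3 : (fun t : ℂ => f (p + t • v)) = (fun z => f (z - -p)) ∘ u := by
    funext t; simp [u, add_comm]
  rw [iteratedDeriv_eq_iteratedFDeriv, h3, hr.iteratedFDeriv_eq_sum_of_completeSpace]
  simp [u, Finset.card_univ, Fintype.card_perm]
  left
  simp [FormalMultilinearSeries.coeff, FormalMultilinearSeries.compContinuousLinearMap,
    Function.comp_def]

lemma aux_van_line {E : Type*} [NormedAddCommGroup E] [NormedSpace ℂ E] {f : E → ℂ} {p : E}
    (hf : AnalyticAt ℂ f p) {n : ℕ} (h : ∀ i < n, iteratedFDeriv ℂ i f p = 0) (v : E) :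
    (n : ℕ∞) ≤ analyticOrderAt (fun t : ℂ => f (p + t • v)) 0 := by
  rw [natCast_le_analyticOrderAt_iff_iteratedDeriv_eq_zero (aux_line_an hf v)]
  intro i hi
  obtain ⟨q, r, hr⟩ := hf
  rw [aux_line_deriv ⟨r, hr⟩]
  have := hr.iteratedFDeriv_eq_sum_of_completeSpace (n := i) (fun _ => v)
  rw [h i hi] at this
  simpa [Finset.card_univ, Fintype.card_perm] using this.symm

lemma aux_line_van {E : Type*} [NormedAddCommGroup E] [NormedSpace ℂ E] {f : E → ℂ} {p : E}
    (hf : AnalyticAt ℂ f p) {n : ℕ} {V : Set E} (hV : Dense V)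
    (h : ∀ v ∈ V, (n : ℕ∞) ≤ analyticOrderAt (fun t : ℂ => f (p + t • v)) 0) :
    ∀ i < n, iteratedFDeriv ℂ i f p = 0 := by
  intro i hi
  obtain ⟨q, r, hr⟩ := id hf
  have h0 : (fun v : E => q i (fun _ => v)) = fun _ => 0 := by
    apply Continuous.ext_on hV (by fun_prop) continuous_const
    intro v hv
    have := (natCast_le_analyticOrderAt_iff_iteratedDeriv_eq_zero (aux_line_an hf v)).1 (h v hv) i hi
    rw [aux_line_deriv ⟨r, hr⟩] at this
    simpa [Nat.factorial_ne_zero] using this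
  ext v
  rw [hr.iteratedFDeriv_eq_sum_of_completeSpace]
  have h1 := (q i).iteratedFDeriv_comp_diagonal 0 v
  rw [h0] at h1
  rw [← h1]
  simp

lemma aux_van_pd {E : Type*} [NormedAddCommGroup E] [NormedSpace ℂ E] {f : E → ℂ} {p : E}
    (hf : AnalyticAt ℂ f p) (i : ℕ) (w : E) (m : Fin i → E) :
    iteratedFDeriv ℂ i (fun y => fderiv ℂ f y w) p m
      = iteratedFDeriv ℂ (i + 1) f p (Fin.snoc m w) := by
  rw [iteratedFDeriv_succ_apply_right]
  have h1 : (fun y => fderiv ℂ f y w) = (ContinuousLinearMap.apply ℂ ℂ w) ∘ (fderiv ℂ f) := by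
    funext y; rfl
  rw [h1, ContinuousLinearMap.iteratedFDeriv_comp_left (n := i) _ (hf.fderiv.contDiffAt) le_rfl]
  simp

lemma aux_pd_van {N : ℕ} {f : (Fin N → ℂ) → ℂ} {p : Fin N → ℂ}
    (hf : AnalyticAt ℂ f p) {n : ℕ} (h0 : f p = 0)
    (h : ∀ j, ∀ i < n, iteratedFDeriv ℂ i (fun y => fderiv ℂ f y (Pi.single j 1)) p = 0) :
    ∀ i < n + 1, iteratedFDeriv ℂ i f p = 0 := by
  intro i hi
  rcases i with _ | i
  · ext m; simp [h0]
  ext m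
  rw [iteratedFDeriv_succ_apply_right]
  have : iteratedFDeriv ℂ i (fun y => fderiv ℂ f y) p (Fin.init m) = 0 := by
    apply ContinuousLinearMap.coe_injective
    refine LinearMap.pi_ext' fun j => LinearMap.ext_ring ?_
    have h1 := aux_van_pd hf i (Pi.single j 1) (Fin.init m)
    rw [h j i (by omega), iteratedFDeriv_succ_apply_right] at h1
    simpa using h1.symm
  rw [this]; simp

lemma aux_eval_hasFDerivAt {N : ℕ} (p : MvPolynomial (Fin N) ℂ) (y : Fin N → ℂ) :
    ∃ L : (Fin N → ℂ) →L[ℂ] ℂ, HasFDerivAt (fun z => eval z p) L y ∧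
      ∀ j, L (Pi.single j 1) = eval y (pderiv j p) := by
  induction p using MvPolynomial.induction_on with
  | C a => exact ⟨0, by simpa using hasFDerivAt_const (𝕜 := ℂ) a y, by simp⟩
  | add p q hp hq =>
    obtain ⟨L, hL, hL'⟩ := hp
    obtain ⟨M, hM, hM'⟩ := hq
    refine ⟨L + M, ?_, fun j => by simp [hL', hM']⟩
    simp only [map_add]
    exact hL.add hM
  | mul_X p n hp =>
    obtain ⟨L, hL, hL'⟩ := hp
    have h1 : HasFDerivAt (fun z : Fin N → ℂ => z n)
      (ContinuousLinearMap.proj n : (Fin N → ℂ) →L[ℂ] ℂ) y := hasFDerivAt_apply n y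
    simp only [map_mul, eval_X]
    refine ⟨_, hL.mul h1, fun j => ?_⟩
    by_cases hj : n = j
    · subst hj; simp [Derivation.leibniz, hL']
    · simp [Derivation.leibniz, hL', pderiv_X_of_ne hj, hj]

lemma aux_eval_an {N : ℕ} (p : MvPolynomial (Fin N) ℂ) (y : Fin N → ℂ) :
    AnalyticAt ℂ (fun z => eval z p) y := 
  AnalyticOnNhd.eval_mvPolynomial p y (Set.mem_univ _)

lemma aux_dense {N : ℕ} (J : MvPolynomial (Fin N) ℂ) (hJ : J ≠ 0) (x : Fin N → ℂ) :
    Dense {v : Fin N → ℂ | eval (x + v) J ≠ 0} := by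
  rw [dense_iff_inter_open]
  intro U hU ⟨u, hu⟩
  by_contra hcon
  apply hJ
  obtain ⟨ε, hε, hb⟩ := Metric.isOpen_iff.1 hU u hu
  have : ∀ z ∈ Set.pi Set.univ (fun i => Metric.ball (x i + u i) ε), eval z J = eval z 0 := by
    intro z hz
    by_contra hne
    apply hcon
    refine ⟨z - x, hb ?_, ?_⟩
    · rw [ball_pi _ hε]
      intro i hi
      have := hz i hi
      rw [Metric.mem_ball, dist_eq_norm] at this ⊢
      convert this using 2
      simp; ring
    · simpa using hne
  exact MvPolynomial.funext_set (fun i => Metric.ball (x i + u i) ε) (hs := fun i => 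
    infinite_of_mem_nhds _ (Metric.ball_mem_nhds _ hε)) this

lemma aux_poly_deriv (q : Polynomial ℂ) (i : ℕ) :
    iteratedDeriv i (fun t => q.eval t) = fun t => (Polynomial.derivative^[i] q).eval t := by
  induction i with
  | zero => simp
  | succ i ih =>
    rw [iteratedDeriv_succ, ih]
    funext t
    rw [Polynomial.deriv, Function.iterate_succ_apply']

lemma aux_order {N D : ℕ} (J : MvPolynomial (Fin N) ℂ) (hJ : J.totalDegree ≤ D)
    (x v : Fin N → ℂ) (hv : eval (x + v) J ≠ 0) :
    analyticOrderAt (fun t : ℂ => eval (x + t • v) J) 0 ≤ D := by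
  let q : Polynomial ℂ := aeval (fun i => Polynomial.C (x i) + Polynomial.X * Polynomial.C (v i)) J
  have hq : ∀ t, q.eval t = eval (x + t • v) J := by
    intro t
    have : (Polynomial.evalRingHom t).comp (aeval (fun i => Polynomial.C (x i) + Polynomial.X * Polynomial.C (v i))).toRingHom = eval (x + t • v) := by
      apply MvPolynomial.ringHom_ext
      · intro r; simp
      · intro i; simp; ring
    exact RingHom.congr_fun this J
  have hdeg : q.natDegree ≤ D := by
    have := aeval_natDegree_le (m := D) (n := 1) J hJ (fun i => Polynomial.C (x i) + Polynomial.X * Polynomial.C (v i)) (by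
      intro i; refine (Polynomial.natDegree_add_le _ _).trans ?_
      refine max_le (by simp) ((Polynomial.natDegree_mul_C_le _ _).trans Polynomial.natDegree_X_le))
    rw [mul_one] at this
    exact this
  by_contra hlt
  rw [not_le] at hlt
  have hle : ((D + 1 : ℕ) : ℕ∞) ≤ analyticOrderAt (fun t : ℂ => eval (x + t • v) J) 0 := by
    push_cast; exact Order.add_one_le_of_lt hlt
  rw [natCast_le_analyticOrderAt_iff_iteratedDeriv_eq_zero (aux_line_an (aux_eval_an J x) v)] at hle
  apply hv
  have hq0 : q = 0 := by
    ext i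
    by_cases hi : i < D + 1
    · have := hle i hi
      simp only [← hq] at this
      rw [aux_poly_deriv] at this
      beta_reduce at this
      rw [← Polynomial.coeff_zero_eq_eval_zero,
        Polynomial.coeff_iterate_derivative] at this
      simpa [Nat.descFactorial_self, Nat.factorial_ne_zero] using this
    · rw [Polynomial.coeff_eq_zero_of_natDegree_lt (by omega)]; simp
  have := hq 1
  rw [hq0] at this
  simpa using this.symm

lemma aux_chain_s15 {N : ℕ} (P : Fin N → MvPolynomial (Fin N) ℂ)
    (F : (Fin N → ℂ) → (Fin N → ℂ))
    (hF : ∀ x i, F x i = MvPolynomial.eval x (P i)) (y : Fin N → ℂ)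
    {φ : (Fin N → ℂ) → ℂ} (hφ : DifferentiableAt ℂ φ (F y)) (i : Fin N) :
    ∑ j, fderiv ℂ (φ ∘ F) y (Pi.single j 1) *
      eval y ((Matrix.of fun i j => pderiv j (P i)).adjugate j i) =
    fderiv ℂ φ (F y) (Pi.single i 1) * eval y (Matrix.of fun i j => pderiv j (P i)).det := by
  choose L hL hL' using fun i => aux_eval_hasFDerivAt (P i) y
  have hFd : HasFDerivAt F (ContinuousLinearMap.pi L) y := by
    rw [hasFDerivAt_pi']
    intro i
    have : (fun z => F z i) = fun z => eval z (P i) := by funext z; exact hF z i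
    rw [this]
    exact hL i
  have h1 : ∀ j, fderiv ℂ (φ ∘ F) y (Pi.single j 1)
      = ∑ l, fderiv ℂ φ (F y) (Pi.single l 1) * eval y (pderiv j (P l)) := by
    intro j
    rw [(hφ.hasFDerivAt.comp y hFd).fderiv, ContinuousLinearMap.comp_apply]
    have h2 : (ContinuousLinearMap.pi L) (Pi.single j 1)
        = ∑ l, eval y (pderiv j (P l)) • (Pi.single l 1 : Fin N → ℂ) := by
      funext l
      simp [hL', Finset.sum_apply, Pi.single_apply]
    rw [h2, map_sum]
    simp [mul_comm]
  set M := (Matrix.of fun i j => pderiv j (P i)) with hM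
  have h3 : ∀ l, ∑ j, eval y (pderiv j (P l)) * eval y (M.adjugate j i)
      = if l = i then eval y M.det else 0 := by
    intro l
    have := congrFun (congrFun (Matrix.mul_adjugate M) l) i
    rw [Matrix.mul_apply] at this
    have h4 := congrArg (eval y) this
    simp only [map_sum, map_mul] at h4
    simp only [hM, Matrix.of_apply] at h4 ⊢
    rw [h4]
    by_cases h : l = i
    · subst h; simp
    · simp [h]
  simp_rw [h1, Finset.sum_mul]
  rw [Finset.sum_comm]
  simp_rw [mul_assoc, ← Finset.mul_sum, h3]
  simp

lemma aux_sum_order {ι : Type*} (s : Finset ι) (f g : ι → ℂ → ℂ) (n : ℕ)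
    (hf : ∀ i, AnalyticAt ℂ (f i) 0) (hg : ∀ i, AnalyticAt ℂ (g i) 0)
    (h : ∀ i, (n : ℕ∞) ≤ analyticOrderAt (f i) 0) :
    (n : ℕ∞) ≤ analyticOrderAt (fun t => ∑ i ∈ s, f i t * g i t) 0 := by
  classical
  induction s using Finset.induction_on with
  | empty =>
    have : analyticOrderAt (fun t : ℂ => ∑ i ∈ (∅ : Finset ι), f i t * g i t) 0 = ⊤ := by
      rw [analyticOrderAt_eq_top]; simp
    rw [this]; exact le_top
  | insert a s ha ih =>
    have h1 : (fun t => ∑ i ∈ insert a s, f i t * g i t)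
        = (f a * g a) + fun t => ∑ i ∈ s, f i t * g i t := by
      funext t; simp [Finset.sum_insert ha]
    rw [h1]
    refine le_trans (le_min ?_ ih) le_analyticOrderAt_add
    rw [analyticOrderAt_mul (hf a) (hg a)]
    exact (h a).trans le_self_add

lemma aux_F_an {N : ℕ} (P : Fin N → MvPolynomial (Fin N) ℂ)
    (F : (Fin N → ℂ) → (Fin N → ℂ))
    (hF : ∀ x i, F x i = MvPolynomial.eval x (P i)) (y : Fin N → ℂ) : AnalyticAt ℂ F y := by
  rw [analyticAt_pi_iff]
  intro i
  have : (fun z => F z i) = fun z => eval z (P i) := by funext z; exact hF z i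
  rw [this]
  exact aux_eval_an _ _

lemma aux_step {N D : ℕ} (P : Fin N → MvPolynomial (Fin N) ℂ)
    (F : (Fin N → ℂ) → (Fin N → ℂ))
    (hF : ∀ x i, F x i = MvPolynomial.eval x (P i)) (x : Fin N → ℂ)
    (hJ : (Matrix.of fun i j => pderiv j (P i)).det ≠ 0)
    (hJD : (Matrix.of fun i j => pderiv j (P i)).det.totalDegree ≤ D)
    {φ : (Fin N → ℂ) → ℂ} (hφ : AnalyticAt ℂ φ (F x)) (n : ℕ)
    (h : ∀ i < n + D + 1, iteratedFDeriv ℂ i (φ ∘ F) x = 0) (l : Fin N) :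
    ∀ i < n, iteratedFDeriv ℂ i ((fun y => fderiv ℂ φ y (Pi.single l 1)) ∘ F) x = 0 := by
  have hFa := aux_F_an P F hF x
  have hh : AnalyticAt ℂ (φ ∘ F) x := hφ.comp hFa
  have hpd : ∀ j, AnalyticAt ℂ (fun y => fderiv ℂ (φ ∘ F) y (Pi.single j 1)) x := fun j =>
    (ContinuousLinearMap.analyticAt (ContinuousLinearMap.apply ℂ ℂ (Pi.single j 1 : Fin N → ℂ)) _).comp
      hh.fderiv
  have hpφ : AnalyticAt ℂ ((fun y => fderiv ℂ φ y (Pi.single l 1)) ∘ F) x :=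
    ((ContinuousLinearMap.analyticAt (ContinuousLinearMap.apply ℂ ℂ (Pi.single l 1 : Fin N → ℂ)) _).comp
      hφ.fderiv).comp hFa
  set J := (Matrix.of fun i j => pderiv j (P i)).det with hJdef
  refine aux_line_van hpφ (aux_dense J hJ x) ?_
  intro v hv
  have hord := aux_order J hJD x v hv
  have h1 := aux_sum_order Finset.univ
    (fun j t => fderiv ℂ (φ ∘ F) (x + t • v) (Pi.single j 1))
    (fun j t => eval (x + t • v) ((Matrix.of fun i j => pderiv j (P i)).adjugate j l)) (n + D)
    (fun j => aux_line_an (hpd j) v) (fun j => aux_line_an (aux_eval_an _ x) v)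
    (fun j => aux_van_line (hpd j) (n := n + D) (by
      intro i hi
      ext m
      rw [aux_van_pd hh, h (i + 1) (by omega)]
      rfl) v)
  have hev : ∀ᶠ y in nhds x, DifferentiableAt ℂ φ (F y) :=
    hFa.continuousAt.eventually (hφ.eventually_analyticAt.mono fun z hz => hz.differentiableAt)
  have hc : Filter.Tendsto (fun t : ℂ => x + t • v) (nhds 0) (nhds x) := by
    have : Continuous (fun t : ℂ => x + t • v) := by fun_prop
    simpa using this.tendsto 0
  have hev2 := hc.eventually hev
  have h2 : (fun t : ℂ => ∑ j, fderiv ℂ (φ ∘ F) (x + t • v) (Pi.single j 1) *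
      eval (x + t • v) ((Matrix.of fun i j => pderiv j (P i)).adjugate j l)) =ᶠ[nhds 0]
      ((fun t : ℂ => ((fun y => fderiv ℂ φ y (Pi.single l 1)) ∘ F) (x + t • v)) *
        fun t : ℂ => eval (x + t • v) J) := by
    filter_upwards [hev2] with t ht
    exact aux_chain_s15 P F hF (x + t • v) ht l
  rw [analyticOrderAt_congr h2, analyticOrderAt_mul (aux_line_an hpφ v)
    (aux_line_an (aux_eval_an J x) v)] at h1
  have h3 := h1.trans (add_le_add_right hord _)
  push_cast at h3
  exact (ENat.add_le_add_iff_right (ENat.natCast_ne_top D)).1 h3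

lemma aux_ind {N D : ℕ} (P : Fin N → MvPolynomial (Fin N) ℂ)
    (F : (Fin N → ℂ) → (Fin N → ℂ))
    (hF : ∀ x i, F x i = MvPolynomial.eval x (P i)) (x : Fin N → ℂ)
    (hJ : (Matrix.of fun i j => pderiv j (P i)).det ≠ 0)
    (hJD : (Matrix.of fun i j => pderiv j (P i)).det.totalDegree ≤ D) (m : ℕ) :
    ∀ {φ : (Fin N → ℂ) → ℂ}, AnalyticAt ℂ φ (F x) →
    (∀ i < m * (D + 1) + 1, iteratedFDeriv ℂ i (φ ∘ F) x = 0) →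
    ∀ i < m + 1, iteratedFDeriv ℂ i φ (F x) = 0 := by
  induction m with
  | zero =>
    intro φ hφ h i hi
    have h0 := h 0 (by omega)
    obtain rfl : i = 0 := by omega
    ext v
    have := DFunLike.congr_fun h0 (fun _ => 0)
    simpa using this
  | succ m ih =>
    intro φ hφ h
    have h0 : φ (F x) = 0 := by
      have := DFunLike.congr_fun (h 0 (by omega)) (fun _ => 0)
      simpa using this
    refine aux_pd_van hφ h0 fun j => ?_
    refine ih ((ContinuousLinearMap.analyticAt
      (ContinuousLinearMap.apply ℂ ℂ (Pi.single j 1 : Fin N → ℂ)) _).comp hφ.fderiv) ?_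
    refine aux_step P F hF x hJ hJD hφ _ ?_ j
    intro i hi
    refine h i ?_
    rw [add_mul]
    omega

end Aux

/-- quantitative estimate underlying Proposition 5.2: for a
homogeneous polynomial lift `F` of degree `d ≥ 1` of a holomorphic self-map of `ℙ^k`
(components homogeneous of degree `d`, only common zero `0`), every `x ∈ ℂ^{k+1}` and
every `φ` analytic near `F(x)` with finite order of vanishing satisfy
`ord_x(φ ∘ F) ≤ (k+1)·d·ord_{F(x)}(φ)`. -/
theorem ord_comp_polynomial_lift_le
    (k d : ℕ) (hd : 1 ≤ d)
    (P : Fin (k+1) → MvPolynomial (Fin (k+1)) ℂ)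
    (hhom : ∀ i, (P i).IsHomogeneous d)
    (F : (Fin (k+1) → ℂ) → (Fin (k+1) → ℂ))
    (hF : ∀ x i, F x i = MvPolynomial.eval x (P i))
    (hzero : ∀ x : Fin (k+1) → ℂ, (∀ i, MvPolynomial.eval x (P i) = 0) → x = 0)
    (x : Fin (k+1) → ℂ) (φ : (Fin (k+1) → ℂ) → ℂ)
    (hφ : AnalyticAt ℂ φ (F x)) (hφfin : ordAt φ (F x) ≠ ⊤) :
    ordAt (φ ∘ F) x ≤ (((k + 1) * d : ℕ) : ℕ∞) * ordAt φ (F x) := by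
  have hJ := aux_jac hd P hhom hzero
  have hJD : (Matrix.of fun i j => MvPolynomial.pderiv j (P i)).det.totalDegree
      ≤ (k + 1) * (d - 1) := by
    apply MvPolynomial.IsHomogeneous.totalDegree_le
    rw [Matrix.det_apply]
    refine MvPolynomial.IsHomogeneous.sum _ _ _ fun σ _ => ?_
    have h1 : (∏ i, (Matrix.of fun i j => MvPolynomial.pderiv j (P i)) (σ i) i).IsHomogeneous
        ((k + 1) * (d - 1)) := by
      have := MvPolynomial.IsHomogeneous.prod Finset.univ
        (fun i => (Matrix.of fun i j => MvPolynomial.pderiv j (P i)) (σ i) i) (fun _ => d - 1)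
        (fun i _ => (hhom (σ i)).pderiv)
      simpa using this
    rcases Int.units_eq_one_or (Equiv.Perm.sign σ) with h | h
    · rw [h, one_smul]; exact h1
    · rw [h, Units.neg_smul, one_smul]; exact h1.neg
  by_contra hlt
  rw [not_le] at hlt
  obtain ⟨m, hm⟩ := ENat.ne_top_iff_exists.1 hφfin
  have hne : ((fun n : ℕ => (n : ℕ∞)) '' {n : ℕ | iteratedFDeriv ℂ n φ (F x) ≠ 0}).Nonempty := by
    by_contra hemp
    rw [Set.not_nonempty_iff_eq_empty] at hemp
    apply hφfin
    rw [ordAt, hemp, sInf_empty]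
  obtain ⟨m', hm', hmm⟩ := csInf_mem hne
  have hm2 : (m' : ℕ∞) = ordAt φ (F x) := hmm
  refine hm' (aux_ind P F hF x hJ hJD m' hφ ?_ m' (Nat.lt_succ_self _))
  intro i hi
  by_contra hi0
  have h3 : ordAt (φ ∘ F) x ≤ (i : ℕ∞) := sInf_le ⟨i, hi0, rfl⟩
  have h4 := hlt.trans_le h3
  rw [← hm2, ← Nat.cast_mul, Nat.cast_lt] at h4
  have h5 : (k + 1) * (d - 1) + 1 ≤ (k + 1) * d := by
    obtain ⟨e, rfl⟩ : ∃ e, d = e + 1 := ⟨d - 1, by omega⟩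
    rw [Nat.add_sub_cancel, mul_add]
    omega
  have h6 := Nat.mul_le_mul_left m' h5
  rw [mul_comm ((k + 1) * d)] at h4
  omega
end
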